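/- arXiv:1505.06710 — 2 statements merged into one kernel-verified Lean document; each statement's English description precedes it below -/
import Mathlib

section
/- Poincaré inequality for the Dyck random transposition chain (spectral gap at least 1/n², giving O(n² log n) mixing): for every n ≥ 1 and every function f : 𝓓(n) → ℝ, 𝓔(f,f) ≥ (1/n²) · Var_π(f). -/
open scoped Classical

/-- The set of Dyck paths of length `2n`, identified with their up-step sets:
`n`-element subsets `S` of `{1,…,2n}` with `2·|S ∩ {1,…,k}| ≥ k` for all `k`. -/
noncomputable def dyck (n : ℕ) : Finset (Finset ℕ) :=
  (Finset.Icc 1 (2 * n)).powerset.filter fun S =>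
    S.card = n ∧ ∀ k ∈ Finset.Icc 1 (2 * n), k ≤ 2 * (S ∩ Finset.Icc 1 k).card

/-- Off-diagonal transition probability of the Dyck random transposition chain:
`1/(2n²)` if `y` is obtained from `x` by exchanging one up-step with one
down-step, and `0` otherwise. -/
noncomputable def dyckStep (n : ℕ) (x y : Finset ℕ) : ℝ :=
  if (x \ y).card = 1 ∧ (y \ x).card = 1 then 1 / (2 * (n : ℝ) ^ 2) else 0

/-- Transition matrix of the Dyck random transposition chain. -/
noncomputable def dyckP (n : ℕ) (x y : Finset ℕ) : ℝ :=
  if x = y then 1 - ∑ z ∈ dyck n, dyckStep n x z else dyckStep n x y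

/-- The uniform stationary distribution `π(x) = 1/C_n` on `𝓓(n)`. -/
noncomputable def dyckPi (n : ℕ) : ℝ := ((dyck n).card : ℝ)⁻¹

/-- The Dirichlet form `𝓔(f,f)` of the Dyck random transposition chain. -/
noncomputable def dyckDirichlet (n : ℕ) (f : Finset ℕ → ℝ) : ℝ :=
  (1 / 2) * ∑ x ∈ dyck n, ∑ y ∈ dyck n, (f x - f y) ^ 2 * dyckP n x y * dyckPi n

/-- The variance `Var_π(f)` with respect to the uniform distribution on `𝓓(n)`. -/
noncomputable def dyckVar (n : ℕ) (f : Finset ℕ → ℝ) : ℝ :=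
  (∑ x ∈ dyck n, f x ^ 2 * dyckPi n) - (∑ x ∈ dyck n, f x * dyckPi n) ^ 2

/-!
The up-step sets of Dyck paths of length `2n` are the bases of a matroid of rank `n`. For every
matroid, the bases through an element `e`, with `e` removed, are again the bases of a matroid (the
link of `e`, `Finset.memberSubfamily e`). In rank 2 the bases are the edges of a complete
multipartite graph, whose adjacency matrix has a single positive eigenvalue; Oppenheim's
trickle-down argument carries this property to the pair weights of a matroid of any rank. It yields
`(r - 1) * sqDev B f ≤ ∑ e, sqDev (link e) f` in rank `r`. The exchange energy satisfies the same
relation with equality, because adjacent bases share `r - 1` elements, so the Poincaré inequality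
reduces to rank 1, where any two bases are adjacent.
-/

open Finset Matrix

theorem exists_pos_of_isIrreducible {ι : Type*} {W : Matrix ι ι ℝ} (hW : W.IsIrreducible) (i : ι) :
    ∃ j, 0 < W i j := by
  let := Wᵀ.toQuiver
  obtain ⟨p, hp⟩ := hW.transpose.connected i i
  cases p with
  | nil => simp at hp
  | cons _ e => exact ⟨_, e.down⟩

theorem eq_of_isIrreducible {ι : Type*} {W : Matrix ι ι ℝ} (hW : W.IsIrreducible) {h : ι → ℝ}
    (h_adj : ∀ i j, 0 < W i j → h i = h j) (i j : ι) : h i = h j := by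
  let := W.toQuiver
  obtain ⟨p, -⟩ := hW.connected i j
  induction p with
  | nil => rfl
  | cons _ e ih => exact ih.trans (h_adj _ _ e.down)

section SymmetricMatrix

variable {ι : Type*} [Fintype ι] {W : Matrix ι ι ℝ}

theorem mulVec_one_apply (W : Matrix ι ι ℝ) (i : ι) : (W *ᵥ 1) i = ∑ j, W i j := by
  simp only [mulVec, dotProduct, Pi.one_apply, mul_one]

theorem mulVec_one_pos_of_isIrreducible (hW : W.IsIrreducible) (i : ι) : 0 < (W *ᵥ 1) i := by
  obtain ⟨j, hj⟩ := exists_pos_of_isIrreducible hW i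
  rw [mulVec_one_apply]
  exact sum_pos' (fun j _ ↦ hW.nonneg i j) ⟨j, mem_univ j, hj⟩

theorem posSemidef_of_forall_mulVec_eq_smul {M : Matrix ι ι ℝ} (hM : M.IsHermitian)
    (h_eig : ∀ l : ℝ, l < 0 → ∀ v : ι → ℝ, M *ᵥ v = l • v → v = 0) : M.PosSemidef := by
  rw [hM.posSemidef_iff_eigenvalues_nonneg]
  intro i
  by_contra! h_neg
  refine hM.eigenvectorBasis.orthonormal.ne_zero i (WithLp.ofLp_injective 2 ?_)
  exact h_eig _ h_neg _ (hM.mulVec_eigenvectorBasis i)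

theorem posSemidef_of_forall_mulVec_eq_smul_mul {M : Matrix ι ι ℝ} (hM : M.IsHermitian)
    {w : ι → ℝ} (hw : ∀ i, 0 < w i)
    (h_eig : ∀ l : ℝ, l < 0 → ∀ h : ι → ℝ, M *ᵥ h = l • (w * h) → h = 0) : M.PosSemidef := by
  have hs (i : ι) : √(w i) ≠ 0 := (Real.sqrt_pos.2 (hw i)).ne'
  set D : Matrix ι ι ℝ := diagonal fun i ↦ (√(w i))⁻¹ with hD
  have hD_star : star D = D := by simp [hD, star_eq_conjTranspose]
  have hD_apply (v : ι → ℝ) (i : ι) : (D *ᵥ v) i = (√(w i))⁻¹ * v i := mulVec_diagonal _ _ _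
  have hD_unit : IsUnit D := by
    simpa [hD, Matrix.isUnit_diagonal, Pi.isUnit_iff] using hs
  rw [← hD_unit.posSemidef_star_left_conjugate_iff]
  refine posSemidef_of_forall_mulVec_eq_smul (isHermitian_conjTranspose_mul_mul D hM)
    fun l hl v hv ↦ ?_
  rw [hD_star, ← mulVec_mulVec, ← mulVec_mulVec] at hv
  have hDv : D *ᵥ v = 0 := by
    refine h_eig l hl _ (funext fun i ↦ ?_)
    have h_eigen := congr_fun hv i
    rw [hD_apply, inv_mul_eq_iff_eq_mul₀ (hs i)] at h_eigen
    rw [h_eigen, Pi.smul_apply, Pi.smul_apply, Pi.mul_apply, hD_apply]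
    nth_rw 2 [← Real.mul_self_sqrt (hw i).le]
    have := hs i
    simp only [smul_eq_mul]
    field_simp
  ext i
  simpa [hD_apply, hs i] using congr_fun hDv i

theorem dotProduct_mulVec_comm (hW : W.IsSymm) (u v : ι → ℝ) :
    u ⬝ᵥ W *ᵥ v = v ⬝ᵥ W *ᵥ u := by
  rw [dotProduct_comm, dotProduct_mulVec, ← mulVec_transpose, hW.eq]

theorem sum_sum_mul_sub_sq (hW : W.IsSymm) (h : ι → ℝ) :
    ∑ i, ∑ j, W i j * (h i - h j) ^ 2 = 2 * (h ⬝ᵥ (W *ᵥ 1 * h) - h ⬝ᵥ W *ᵥ h) := by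
  have h_swap : ∑ i, ∑ j, W i j * h j ^ 2 = ∑ i, ∑ j, W i j * h i ^ 2 := by
    rw [sum_comm]
    simp only [hW.apply]
  calc ∑ i, ∑ j, W i j * (h i - h j) ^ 2
      = ∑ i, ∑ j, W i j * h i ^ 2 + ∑ i, ∑ j, W i j * h j ^ 2
        - 2 * ∑ i, ∑ j, h i * (W i j * h j) := by
        simp only [mul_sum, ← sum_add_distrib, ← sum_sub_distrib]
        exact sum_congr rfl fun i _ ↦ sum_congr rfl fun j _ ↦ by ring
    _ = 2 * (∑ i, h i * ((∑ j, W i j) * h i) - ∑ i, h i * ∑ j, W i j * h j) := by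
        have h_sq (i : ι) : ∑ j, W i j * h i ^ 2 = h i * ((∑ j, W i j) * h i) := by
          rw [← sum_mul]; ring
        simp only [h_swap, h_sq, ← mul_sum]
        ring
    _ = _ := by simp only [dotProduct, Pi.mul_apply, mulVec_one_apply]; rfl

theorem eq_of_mulVec_eq_smul_mul (hW : W.IsSymm) (h_irr : W.IsIrreducible) {μ : ℝ} (hμ : 1 ≤ μ)
    {h : ι → ℝ} (h_eig : W *ᵥ h = μ • (W *ᵥ 1 * h)) (i j : ι) : h i = h j := by
  have h_term_nonneg (i j : ι) : 0 ≤ W i j * (h i - h j) ^ 2 :=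
    mul_nonneg (h_irr.nonneg i j) (sq_nonneg _)
  have h_row_nonneg (i : ι) : 0 ≤ ∑ j, W i j * (h i - h j) ^ 2 :=
    sum_nonneg fun j _ ↦ h_term_nonneg i j
  have h_norm : 0 ≤ h ⬝ᵥ (W *ᵥ 1 * h) := sum_nonneg fun i _ ↦ by
    have := mul_nonneg (mulVec_one_pos_of_isIrreducible h_irr i).le (sq_nonneg (h i))
    rw [Pi.mul_apply]
    linarith
  have h_zero : ∑ i, ∑ j, W i j * (h i - h j) ^ 2 = 0 := by
    refine le_antisymm ?_ (sum_nonneg fun i _ ↦ h_row_nonneg i)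
    rw [sum_sum_mul_sub_sq hW, h_eig, dotProduct_smul, smul_eq_mul]
    nlinarith
  refine eq_of_isIrreducible h_irr (fun i j hij ↦ ?_) i j
  have h_row := (sum_eq_zero_iff_of_nonneg fun i _ ↦ h_row_nonneg i).1 h_zero i (mem_univ i)
  have h_term := (sum_eq_zero_iff_of_nonneg fun j _ ↦ h_term_nonneg i j).1 h_row j (mem_univ j)
  simpa [hij.ne', sub_eq_zero] using h_term

theorem eq_zero_or_one_le_of_mulVec_eq_smul_mul (hw : ∀ i, 0 < (W *ᵥ 1) i) {μ : ℝ}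
    (hμ : 0 < μ) {h : ι → ℝ}
    (h_eig : W *ᵥ h = μ • (W *ᵥ 1 * h))
    (h_loc : h ⬝ᵥ W *ᵥ h ≤ ∑ i, (W *ᵥ h) i ^ 2 / (W *ᵥ 1) i) : h = 0 ∨ 1 ≤ μ := by
  set Z := ∑ i, (W *ᵥ 1) i * h i ^ 2 with hZ
  have h_form : h ⬝ᵥ W *ᵥ h = μ * Z := by
    rw [h_eig, dotProduct, hZ, mul_sum]
    exact sum_congr rfl fun i _ ↦ by simp only [Pi.smul_apply, Pi.mul_apply, smul_eq_mul]; ring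
  have h_sq : ∑ i, (W *ᵥ h) i ^ 2 / (W *ᵥ 1) i = μ * (μ * Z) := by
    rw [h_eig, hZ, mul_sum, mul_sum]
    refine sum_congr rfl fun i _ ↦ ?_
    have := (hw i).ne'
    simp only [Pi.smul_apply, Pi.mul_apply, smul_eq_mul]
    field_simp
  rw [h_form, h_sq] at h_loc
  have h_term_nonneg (i : ι) : 0 ≤ (W *ᵥ 1) i * h i ^ 2 := mul_nonneg (hw i).le (sq_nonneg _)
  obtain hZ0 | hZ_pos := (sum_nonneg fun i _ ↦ h_term_nonneg i : 0 ≤ Z).eq_or_lt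
  · left
    ext i
    have := (sum_eq_zero_iff_of_nonneg fun i _ ↦ h_term_nonneg i).1 hZ0.symm i (mem_univ i)
    simpa [(hw i).ne'] using this
  · exact .inr ((le_mul_iff_one_le_left (by positivity)).1 h_loc)

theorem eq_zero_of_mulVec_eq_smul_mul (hW : W.IsSymm) (h_irr : W.IsIrreducible) {μ : ℝ}
    (hμ : 0 < μ) {h : ι → ℝ} (h_eig : W *ᵥ h = μ • (W *ᵥ 1 * h)) (h_orth : W *ᵥ 1 ⬝ᵥ h = 0)
    (h_loc : h ⬝ᵥ W *ᵥ h ≤ ∑ i, (W *ᵥ h) i ^ 2 / (W *ᵥ 1) i) : h = 0 := by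
  have hw (i : ι) : 0 < (W *ᵥ 1) i := mulVec_one_pos_of_isIrreducible h_irr i
  obtain h_zero | h_one_le := eq_zero_or_one_le_of_mulVec_eq_smul_mul hw hμ h_eig h_loc
  · exact h_zero
  ext i
  have h_const := eq_of_mulVec_eq_smul_mul hW h_irr h_one_le h_eig
  have h_sum : (∑ j, (W *ᵥ 1) j) * h i = 0 := by
    rw [← h_orth, dotProduct, sum_mul]
    exact sum_congr rfl fun j _ ↦ by rw [h_const i j]
  have h_pos : 0 < ∑ j, (W *ᵥ 1) j := sum_pos (fun j _ ↦ hw j) ⟨i, mem_univ i⟩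
  exact (mul_eq_zero.1 h_sum).resolve_left h_pos.ne'

/-- The quadratic form of `W` satisfies the Cauchy–Schwarz inequality against the all-ones vector in
the reverse direction. For symmetric nonnegative `W ≠ 0` this says that `W` has exactly one positive
eigenvalue. -/
def ReverseCauchySchwarz (W : Matrix ι ι ℝ) : Prop :=
  ∀ g : ι → ℝ, (1 ⬝ᵥ W *ᵥ 1) * (g ⬝ᵥ W *ᵥ g) ≤ (1 ⬝ᵥ W *ᵥ g) ^ 2

-- This is Oppenheim's trickle-down theorem: `h_loc` is what spectral bounds on the links provide,
-- and it forces every positive eigenvalue of the normalised walk to be at least `1`.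
theorem reverseCauchySchwarz_of_isIrreducible (hW : W.IsSymm) (h_irr : W.IsIrreducible)
    (h_loc : ∀ h : ι → ℝ, h ⬝ᵥ W *ᵥ h ≤ ∑ i, (W *ᵥ h) i ^ 2 / (W *ᵥ 1) i) :
    ReverseCauchySchwarz W := by
  intro g
  obtain _ | _ := isEmpty_or_nonempty ι
  · simp [dotProduct]
  set w := W *ᵥ 1
  have hw (i : ι) : 0 < w i := mulVec_one_pos_of_isIrreducible h_irr i
  have hp : 0 < 1 ⬝ᵥ w := by
    simpa [dotProduct] using sum_pos (fun i _ ↦ hw i) univ_nonempty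
  have h_one_dot (h : ι → ℝ) : 1 ⬝ᵥ W *ᵥ h = w ⬝ᵥ h := by
    rw [dotProduct_mulVec_comm hW, dotProduct_comm]
  set M : Matrix ι ι ℝ := vecMulVec w w - (1 ⬝ᵥ w) • W with hM
  have hM_mulVec (h : ι → ℝ) : M *ᵥ h = (w ⬝ᵥ h) • w - (1 ⬝ᵥ w) • (W *ᵥ h) := by
    simp [hM, sub_mulVec, vecMulVec_mulVec, smul_mulVec]
  have hM_symm : M.IsHermitian := by
    ext i j
    simp [hM, vecMulVec_apply, hW.apply, mul_comm]
  have hM_psd : M.PosSemidef := by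
    refine posSemidef_of_forall_mulVec_eq_smul_mul hM_symm hw fun l hl h h_eig ↦ ?_
    rw [hM_mulVec] at h_eig
    have h_orth : w ⬝ᵥ h = 0 := by
      have h_sum := congr_arg (1 ⬝ᵥ ·) h_eig
      have h_mul : 1 ⬝ᵥ (w * h) = w ⬝ᵥ h := by simp [dotProduct]
      simp only [dotProduct_sub, dotProduct_smul, smul_eq_mul, h_one_dot, h_mul] at h_sum
      exact (mul_eq_zero.1 (by linarith : l * (w ⬝ᵥ h) = 0)).resolve_left hl.ne
    refine eq_zero_of_mulVec_eq_smul_mul hW h_irr (div_pos (neg_pos.2 hl) hp) (funext fun i ↦ ?_)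
      h_orth (h_loc h)
    have h_eig_i := congr_fun h_eig i
    simp only [h_orth, zero_smul, zero_sub, Pi.neg_apply, Pi.smul_apply, smul_eq_mul] at h_eig_i ⊢
    field_simp
    linarith
  have h_nonneg := hM_psd.dotProduct_mulVec_nonneg g
  simp only [star_trivial, hM_mulVec, dotProduct_sub, dotProduct_smul, smul_eq_mul,
    dotProduct_comm g w] at h_nonneg
  rw [h_one_dot g]
  linarith

theorem reverseCauchySchwarz_of_nonpos_on_hyperplane (hW : W.IsSymm) (h_nonneg : ∀ i j, 0 ≤ W i j)
    (h_nonpos : ∀ h : ι → ℝ, 1 ⬝ᵥ h = 0 → h ⬝ᵥ W *ᵥ h ≤ 0) : ReverseCauchySchwarz W := by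
  intro g
  obtain _ | _ := isEmpty_or_nonempty ι
  · simp [dotProduct]
  set t : ℝ := (1 ⬝ᵥ g) / Fintype.card ι
  have h_form : (g - t • 1) ⬝ᵥ W *ᵥ (g - t • 1) =
      g ⬝ᵥ W *ᵥ g - 2 * t * (1 ⬝ᵥ W *ᵥ g) + t ^ 2 * (1 ⬝ᵥ W *ᵥ 1) := by
    simp only [mulVec_sub, sub_dotProduct, dotProduct_sub, mulVec_smul, smul_dotProduct,
      dotProduct_smul, smul_eq_mul, dotProduct_mulVec_comm hW g 1]
    ring
  have h_le := h_nonpos (g - t • 1) (by simp [t, dotProduct_sub])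
  have h_one : 0 ≤ 1 ⬝ᵥ W *ᵥ 1 := by
    simp only [one_dotProduct, mulVec_one_apply]
    exact sum_nonneg fun i _ ↦ sum_nonneg fun j _ ↦ h_nonneg i j
  rw [h_form] at h_le
  nlinarith [mul_nonneg h_one (neg_nonneg.2 h_le), sq_nonneg (1 ⬝ᵥ W *ᵥ g - t * (1 ⬝ᵥ W *ᵥ 1))]

theorem sum_sum_ite_eq {κ : Type*} [Fintype κ] (c : ι → κ) (h : ι → ℝ) :
    ∑ i, ∑ j, (if c i = c j then h i * h j else 0) = ∑ k, (∑ i with c i = k, h i) ^ 2 := by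
  rw [← sum_fiberwise univ c]
  refine sum_congr rfl fun k _ ↦ ?_
  rw [sq, sum_mul_sum]
  refine sum_congr rfl fun i hi ↦ ?_
  rw [sum_filter, (mem_filter.1 hi).2]
  simp only [eq_comm]

theorem dotProduct_mulVec_nonpos_of_multipartite {κ : Type*} [Finite κ] (c : ι → κ)
    (h_zero : ∀ i j, c i = c j → W i j = 0)
    (h_one : ∀ i j, c i ≠ c j → W i j = 1) {h : ι → ℝ} (hh : 1 ⬝ᵥ h = 0) :
    h ⬝ᵥ W *ᵥ h ≤ 0 := by
  have := Fintype.ofFinite κ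
  have h_entry (i j : ι) : h i * (W i j * h j) =
      h i * h j - if c i = c j then h i * h j else 0 := by
    split_ifs with hc
    · simp [h_zero i j hc]
    · simp [h_one i j hc]
  have h_sum : ∑ i, h i = 0 := by rwa [one_dotProduct] at hh
  calc h ⬝ᵥ W *ᵥ h
      = ∑ i, ∑ j, (h i * h j - if c i = c j then h i * h j else 0) := by
        simp only [dotProduct, mulVec, mul_sum, h_entry]
    _ = (∑ i, h i) ^ 2 - ∑ k, (∑ i with c i = k, h i) ^ 2 := by
        simp only [sum_sub_distrib, sum_sum_ite_eq, sq, sum_mul_sum]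
    _ ≤ 0 := by
        rw [h_sum, sq, zero_mul, zero_sub, neg_nonpos]
        exact sum_nonneg fun k _ ↦ sq_nonneg _

end SymmetricMatrix

section Links

variable {α : Type*} [DecidableEq α] {B : Finset (Finset α)} {r : ℕ}

theorem sum_memberSubfamily {M : Type*} [AddCommMonoid M] (B : Finset (Finset α)) (e : α)
    (F : Finset α → M) :
    ∑ s ∈ B.memberSubfamily e, F (insert e s) = ∑ x ∈ B with e ∈ x, F x := by
  rw [← image_insert_memberSubfamily, sum_image]
  intro s hs t ht hst
  rw [mem_coe, mem_memberSubfamily] at hs ht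
  rw [← erase_insert hs.2, ← erase_insert ht.2, hst]

theorem sum_sum_memberSubfamily_insert {M : Type*} [AddCommMonoid M] {T : Finset α}
    (hT : ∀ x ∈ B, x ⊆ T) (F : α → Finset α → M) :
    ∑ e ∈ T, ∑ s ∈ B.memberSubfamily e, F e (insert e s) = ∑ x ∈ B, ∑ e ∈ x, F e x := by
  simp only [fun e ↦ sum_memberSubfamily B e (F e)]
  refine sum_comm' fun e x ↦ ?_
  grind

theorem sum_sum_memberSubfamily {M : Type*} [AddCommMonoid M] {T : Finset α}
    (hT : ∀ x ∈ B, x ⊆ T) (F : α → Finset α → M) :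
    ∑ e ∈ T, ∑ s ∈ B.memberSubfamily e, F e s = ∑ x ∈ B, ∑ e ∈ x, F e (x.erase e) := by
  rw [← sum_sum_memberSubfamily_insert hT fun e x ↦ F e (x.erase e)]
  refine sum_congr rfl fun e _ ↦ sum_congr rfl fun s hs ↦ ?_
  rw [erase_insert (mem_memberSubfamily.1 hs).2]

theorem subset_sup_id {x : Finset α} (hx : x ∈ B) : x ⊆ B.sup id := le_sup (f := id) hx

theorem memberSubfamily_nonempty {e : α} (he : e ∈ B.sup id) : (B.memberSubfamily e).Nonempty := by
  obtain ⟨x, hx, hex⟩ := mem_sup.1 he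
  rw [id] at hex
  exact ⟨x.erase e, mem_memberSubfamily.2 ⟨by rwa [insert_erase hex], notMem_erase e x⟩⟩

/-- The sum of `g e * g a` over the ordered pairs of distinct elements of `x`; together with the
diagonal terms it makes up `(∑ a ∈ x, g a) ^ 2`. -/
def pairSum (g : α → ℝ) (x : Finset α) : ℝ := ∑ e ∈ x, g e * ∑ a ∈ x.erase e, g a

theorem sq_sum_eq_pairSum_add (g : α → ℝ) (x : Finset α) :
    (∑ a ∈ x, g a) ^ 2 = pairSum g x + ∑ a ∈ x, g a ^ 2 := by
  rw [sq, sum_mul, pairSum, ← sum_add_distrib]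
  refine sum_congr rfl fun e he ↦ ?_
  rw [← add_sum_erase x g he]
  ring

theorem sum_pairSum_erase (g : α → ℝ) (x : Finset α) :
    ∑ e ∈ x, pairSum g (x.erase e) = (#x - 2) * pairSum g x := by
  have h_erase (e : α) (he : e ∈ x) :
      pairSum g (x.erase e) = pairSum g x - 2 * (g e * ∑ a ∈ x, g a) + 2 * g e ^ 2 := by
    have h_x := sq_sum_eq_pairSum_add g x
    have h_e := sq_sum_eq_pairSum_add g (x.erase e)
    rw [← add_sum_erase x g he, ← add_sum_erase x (g · ^ 2) he] at h_x
    rw [← add_sum_erase x g he]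
    linarith
  rw [sum_congr rfl h_erase, sum_add_distrib, sum_sub_distrib, sum_const, nsmul_eq_mul, ← mul_sum,
    ← mul_sum, ← sum_mul, ← sq, sq_sum_eq_pairSum_add]
  ring

/-- The pair weights of `B`, indexed by the elements covered by `B`: the entry at `e ≠ a` counts the
members of `B` containing both, and the diagonal vanishes. -/
def pairMatrix (B : Finset (Finset α)) : Matrix ↥(B.sup id) ↥(B.sup id) ℝ :=
  .of fun e a ↦ #((B.memberSubfamily (e : α)).memberSubfamily (a : α))

theorem pairMatrix_pos_iff {e a : ↥(B.sup id)} :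
    0 < pairMatrix B e a ↔ e ≠ a ∧ ∃ x ∈ B, ↑e ∈ x ∧ ↑a ∈ x := by
  simp only [pairMatrix, of_apply, Nat.cast_pos, card_pos, Finset.Nonempty, mem_memberSubfamily,
    mem_insert, not_or, ne_eq, Subtype.ext_iff]
  constructor
  · rintro ⟨s, ⟨hs, hea, -⟩, -⟩
    exact ⟨hea, _, hs, mem_insert_self _ _, mem_insert_of_mem (mem_insert_self _ _)⟩
  · rintro ⟨hea, x, hx, he, ha⟩
    have h_insert := insert_erase (mem_erase.2 ⟨Ne.symm hea, ha⟩)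
    refine ⟨(x.erase e).erase a, ⟨?_, hea, by simp⟩, notMem_erase _ _⟩
    rwa [h_insert, insert_erase he]

theorem pairMatrix_nonneg (e a : ↥(B.sup id)) : 0 ≤ pairMatrix B e a := Nat.cast_nonneg _

theorem pairMatrix_isSymm (B : Finset (Finset α)) : (pairMatrix B).IsSymm := by
  ext e a
  simp only [pairMatrix, transpose_apply, of_apply]
  congr 2
  ext s
  simp only [mem_memberSubfamily]
  grind [Finset.insert_comm]

theorem pairMatrix_mulVec (g : α → ℝ) (e : ↥(B.sup id)) :
    (pairMatrix B *ᵥ fun a ↦ g a) e = ∑ s ∈ B.memberSubfamily (e : α), ∑ a ∈ s, g a := by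
  have h_subset (s : Finset α) (hs : s ∈ B.memberSubfamily (e : α)) : s ⊆ B.sup id :=
    (subset_insert _ _).trans (subset_sup_id (mem_memberSubfamily.1 hs).1)
  rw [← sum_sum_memberSubfamily h_subset fun a _ ↦ g a, ← sum_coe_sort]
  simp only [sum_const, nsmul_eq_mul]
  rfl

theorem dotProduct_pairMatrix_mulVec (f g : α → ℝ) :
    (fun e : ↥(B.sup id) ↦ f e) ⬝ᵥ pairMatrix B *ᵥ (fun a ↦ g a) =
      ∑ x ∈ B, ∑ e ∈ x, f e * ∑ a ∈ x.erase e, g a := by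
  rw [← sum_sum_memberSubfamily (fun _ ↦ subset_sup_id) fun e s ↦ f e * ∑ a ∈ s, g a,
    ← sum_coe_sort]
  simp only [dotProduct, pairMatrix_mulVec, mul_sum]

theorem one_dotProduct_pairMatrix_mulVec (hB : ∀ x ∈ B, #x = r) (g : α → ℝ) :
    1 ⬝ᵥ pairMatrix B *ᵥ (fun e ↦ g e) = (r - 1) * ∑ x ∈ B, ∑ a ∈ x, g a := by
  refine (dotProduct_pairMatrix_mulVec (fun _ ↦ 1) g).trans ?_
  rw [mul_sum]
  refine sum_congr rfl fun x hx ↦ ?_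
  have h_erase (e : α) (he : e ∈ x) : 1 * ∑ a ∈ x.erase e, g a = ∑ a ∈ x, g a - g e := by
    rw [sum_erase_eq_sub he, one_mul]
  rw [sum_congr rfl h_erase, sum_sub_distrib, sum_const, hB x hx, nsmul_eq_mul]
  ring

theorem one_dotProduct_pairMatrix_mulVec_one (hB : ∀ x ∈ B, #x = r) :
    1 ⬝ᵥ pairMatrix B *ᵥ 1 = (r - 1) * (r * #B) := by
  refine (one_dotProduct_pairMatrix_mulVec hB fun _ ↦ 1).trans ?_
  rw [sum_congr rfl fun x hx ↦ by rw [sum_const, hB x hx], sum_const]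
  simp only [nsmul_eq_mul]
  ring

theorem pairMatrix_mulVec_one (hB : ∀ x ∈ B, #x = r) (e : ↥(B.sup id)) :
    (pairMatrix B *ᵥ 1) e = (r - 1) * #(B.memberSubfamily (e : α)) := by
  refine (pairMatrix_mulVec (fun _ ↦ 1) e).trans ?_
  have h_card (s : Finset α) (hs : s ∈ B.memberSubfamily (e : α)) : (#s : ℝ) = r - 1 := by
    rw [mem_memberSubfamily] at hs
    rw [← hB _ hs.1, card_insert_of_notMem hs.2]
    push_cast
    ring
  simp only [sum_const, nsmul_eq_mul, mul_one]
  rw [sum_congr rfl h_card, sum_const, nsmul_eq_mul, mul_comm]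

theorem card_mul_sum_pairSum_le_of_reverseCauchySchwarz (hB : ∀ x ∈ B, #x = r + 2)
    (hW : ReverseCauchySchwarz (pairMatrix B)) (g : α → ℝ) :
    (r + 2) * #B * ∑ x ∈ B, pairSum g x ≤ (r + 1) * (∑ x ∈ B, ∑ a ∈ x, g a) ^ 2 := by
  have h := hW fun e ↦ g e
  rw [one_dotProduct_pairMatrix_mulVec_one hB, one_dotProduct_pairMatrix_mulVec hB,
    dotProduct_pairMatrix_mulVec] at h
  change _ * ∑ x ∈ B, pairSum g x ≤ _ at h
  push_cast at h
  refine le_of_mul_le_mul_left (a := (r + 1 : ℝ)) ?_ (by positivity)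
  linarith

theorem dotProduct_pairMatrix_mulVec_le_sum_div (hB : ∀ x ∈ B, #x = r + 3) (h : α → ℝ)
    (h_link : ∀ e ∈ B.sup id,
      (r + 2) * #(B.memberSubfamily e) * ∑ s ∈ B.memberSubfamily e, pairSum h s ≤
        (r + 1) * (∑ s ∈ B.memberSubfamily e, ∑ a ∈ s, h a) ^ 2) :
    (fun e : ↥(B.sup id) ↦ h e) ⬝ᵥ pairMatrix B *ᵥ (fun e ↦ h e) ≤
      ∑ e, (pairMatrix B *ᵥ fun e ↦ h e) e ^ 2 / (pairMatrix B *ᵥ 1) e := by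
  have h_row (e : ↥(B.sup id)) : ∑ s ∈ B.memberSubfamily (e : α), pairSum h s ≤
      (r + 1) * ((pairMatrix B *ᵥ fun e ↦ h e) e ^ 2 / (pairMatrix B *ᵥ 1) e) := by
    have h_card : (0 : ℝ) < #(B.memberSubfamily (e : α)) :=
      Nat.cast_pos.2 (memberSubfamily_nonempty e.2).card_pos
    have h_one : (pairMatrix B *ᵥ 1) e = (r + 2) * #(B.memberSubfamily (e : α)) := by
      rw [pairMatrix_mulVec_one hB]
      push_cast
      ring
    rw [h_one, pairMatrix_mulVec, ← mul_div_assoc, le_div_iff₀ (by positivity)]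
    linarith [h_link e e.2]
  have h_sum := sum_le_sum fun e (_ : e ∈ univ) ↦ h_row e
  rw [← mul_sum, sum_coe_sort (B.sup id) fun e ↦ ∑ s ∈ B.memberSubfamily e, pairSum h s,
    sum_sum_memberSubfamily (fun _ ↦ subset_sup_id) fun _ s ↦ pairSum h s,
    sum_congr rfl fun x hx ↦ by rw [sum_pairSum_erase, hB x hx], ← mul_sum] at h_sum
  push_cast at h_sum
  rw [dotProduct_pairMatrix_mulVec]
  change ∑ x ∈ B, pairSum h x ≤ _
  refine le_of_mul_le_mul_left (a := (r + 1 : ℝ)) ?_ (by positivity)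
  linarith

end Links

/-- `B` is the family of bases of a matroid of rank `r`, or is empty. Exchange is required in its
dual form (the element `a` to be inserted is prescribed, the removed one `b` is found), which is
equivalent to the usual one. -/
structure IsBaseFamily {α : Type*} [DecidableEq α] (B : Finset (Finset α)) (r : ℕ) : Prop where
  card_eq : ∀ x ∈ B, #x = r
  exchange : ∀ x ∈ B, ∀ y ∈ B, ∀ a ∈ y \ x, ∃ b ∈ x \ y, insert a (x.erase b) ∈ B

namespace IsBaseFamily

variable {α : Type*} [DecidableEq α] {B : Finset (Finset α)} {r : ℕ}

theorem memberSubfamily (hB : IsBaseFamily B (r + 1)) (e : α) :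
    IsBaseFamily (B.memberSubfamily e) r where
  card_eq s hs := by
    rw [mem_memberSubfamily] at hs
    simpa [card_insert_of_notMem hs.2] using hB.card_eq _ hs.1
  exchange s hs t ht a ha := by
    rw [mem_memberSubfamily] at hs ht
    obtain ⟨b, hb, hbB⟩ := hB.exchange _ hs.1 _ ht.1 a (by grind)
    refine ⟨b, by grind, mem_memberSubfamily.2 ⟨?_, by grind⟩⟩
    rwa [Finset.insert_comm, ← erase_insert_of_ne (by grind)]

theorem pairMatrix_pos_or_pos (hB : IsBaseFamily B r) {e k : ↥(B.sup id)}
    (h : 0 < pairMatrix B e k) (b : ↥(B.sup id)) :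
    0 < pairMatrix B e b ∨ 0 < pairMatrix B b k := by
  obtain rfl | heb := eq_or_ne e b
  · exact .inr h
  obtain rfl | hbk := eq_or_ne b k
  · exact .inl h
  simp only [pairMatrix_pos_iff] at h ⊢
  obtain ⟨hek, x, hx, hex, hkx⟩ := h
  obtain ⟨y, hy, hby⟩ := mem_sup.1 b.2
  by_cases hbx : ↑b ∈ x
  · exact .inl ⟨heb, x, hx, hex, hbx⟩
  obtain ⟨c, -, hcB⟩ := hB.exchange x hx y hy b (mem_sdiff.2 ⟨hby, hbx⟩)
  have := Subtype.coe_injective.ne hek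
  obtain hce | hce := eq_or_ne c e
  · exact .inr ⟨hbk, _, hcB, by grind, by grind⟩
  · exact .inl ⟨heb, _, hcB, by grind, by grind⟩

theorem exists_pairMatrix_pos (hB : IsBaseFamily B (r + 2)) (e : ↥(B.sup id)) :
    ∃ k, 0 < pairMatrix B e k := by
  obtain ⟨x, hx, hex⟩ := mem_sup.1 e.2
  obtain ⟨k, hkx, hke⟩ := exists_mem_ne (s := x) (by rw [hB.card_eq x hx]; omega) (e : α)
  exact ⟨⟨k, mem_sup.2 ⟨x, hx, hkx⟩⟩, pairMatrix_pos_iff.2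
    ⟨fun h ↦ hke (Subtype.ext_iff.1 h).symm, x, hx, hex, hkx⟩⟩

theorem pairMatrix_isIrreducible (hB : IsBaseFamily B (r + 2)) : (pairMatrix B).IsIrreducible := by
  refine ⟨pairMatrix_nonneg, fun e k ↦ ?_⟩
  let := (pairMatrix B).toQuiver
  obtain ⟨m, hm⟩ := hB.exists_pairMatrix_pos e
  obtain hek | hkm := hB.pairMatrix_pos_or_pos hm k
  · exact ⟨.cons .nil ⟨hek⟩, by simp⟩
  · rw [← (pairMatrix_isSymm B).apply] at hkm
    exact ⟨.cons (.cons .nil ⟨hm⟩) ⟨hkm⟩, by simp⟩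

/-- The parallelism relation: no base contains both elements. Loops do not occur, because only the
elements covered by `B` are considered. -/
def parallelSetoid (hB : IsBaseFamily B r) : Setoid ↥(B.sup id) where
  r e a := ¬ 0 < pairMatrix B e a
  iseqv := {
    refl e := by simp [pairMatrix_pos_iff]
    symm {e a} h := by rwa [← (pairMatrix_isSymm B).apply] at h
    trans {e b k} heb hbk h := (hB.pairMatrix_pos_or_pos h b).elim heb hbk }

theorem pairMatrix_le_one (hB : IsBaseFamily B 2) (e a : ↥(B.sup id)) :
    pairMatrix B e a ≤ 1 := by
  have h_card := ((hB.memberSubfamily e).memberSubfamily a).card_eq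
  rw [pairMatrix, of_apply, Nat.cast_le_one, card_le_one]
  intro s hs t ht
  rw [card_eq_zero.1 (h_card s hs), card_eq_zero.1 (h_card t ht)]

theorem reverseCauchySchwarz_pairMatrix_of_rank_two (hB : IsBaseFamily B 2) :
    ReverseCauchySchwarz (pairMatrix B) := by
  refine reverseCauchySchwarz_of_nonpos_on_hyperplane (pairMatrix_isSymm B) pairMatrix_nonneg
    fun h hh ↦ ?_
  refine dotProduct_mulVec_nonpos_of_multipartite (Quotient.mk hB.parallelSetoid)
    (fun e a h ↦ ?_) (fun e a h ↦ ?_) hh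
  · exact le_antisymm (not_lt.1 (Quotient.exact h)) (pairMatrix_nonneg e a)
  · have h_pos : 0 < pairMatrix B e a := not_not.1 fun h_par ↦ h (Quotient.sound h_par)
    refine le_antisymm (hB.pairMatrix_le_one e a) ?_
    rw [pairMatrix, of_apply] at h_pos ⊢
    exact_mod_cast h_pos

theorem card_mul_sum_pairSum_le (hB : IsBaseFamily B (r + 2)) (g : α → ℝ) :
    (r + 2) * #B * ∑ x ∈ B, pairSum g x ≤ (r + 1) * (∑ x ∈ B, ∑ a ∈ x, g a) ^ 2 := by
  induction r generalizing B g with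
  | zero =>
    exact card_mul_sum_pairSum_le_of_reverseCauchySchwarz hB.card_eq
      hB.reverseCauchySchwarz_pairMatrix_of_rank_two g
  | succ r ih =>
    refine card_mul_sum_pairSum_le_of_reverseCauchySchwarz hB.card_eq
      (reverseCauchySchwarz_of_isIrreducible (pairMatrix_isSymm B) hB.pairMatrix_isIrreducible
        fun h ↦ ?_) g
    obtain ⟨h, rfl⟩ := Subtype.val_injective.surjective_comp_right h
    exact dotProduct_pairMatrix_mulVec_le_sum_div hB.card_eq h fun e _ ↦
      ih (hB.memberSubfamily e) h

end IsBaseFamily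

section SqDev

variable {ι : Type*}

/-- The sum over `s` of the squared deviations of `f` from its mean on `s`, that is `#s` times the
variance of `f` under the uniform distribution on `s`. -/
noncomputable def sqDev (s : Finset ι) (f : ι → ℝ) : ℝ :=
  ∑ i ∈ s, f i ^ 2 - (∑ i ∈ s, f i) ^ 2 / #s

theorem sqDev_sub_const (s : Finset ι) (f : ι → ℝ) (c : ℝ) : sqDev s (f · - c) = sqDev s f := by
  obtain rfl | hs := s.eq_empty_or_nonempty
  · rfl
  have h_card : (#s : ℝ) ≠ 0 := by positivity
  simp only [sqDev, sub_sq, sum_add_distrib, sum_sub_distrib, sum_const, nsmul_eq_mul, ← sum_mul,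
    ← mul_sum]
  field_simp
  ring

theorem sqDev_eq_zero_of_card_le_one {s : Finset ι} (hs : #s ≤ 1) (f : ι → ℝ) : sqDev s f = 0 := by
  obtain h | h := Nat.le_one_iff_eq_zero_or_eq_one.1 hs
  · simp [sqDev, card_eq_zero.1 h]
  · obtain ⟨i, rfl⟩ := card_eq_one.1 h
    simp [sqDev]

theorem sum_sum_sub_sq (s : Finset ι) (f : ι → ℝ) :
    ∑ i ∈ s, ∑ j ∈ s, (f i - f j) ^ 2 = 2 * #s * sqDev s f := by
  obtain rfl | hs := s.eq_empty_or_nonempty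
  · simp
  have h_card : (#s : ℝ) ≠ 0 := by positivity
  simp only [sqDev, sub_sq, sum_add_distrib, sum_sub_distrib, sum_const, nsmul_eq_mul, ← sum_mul,
    ← mul_sum]
  field_simp
  ring

end SqDev

section ExchangeEnergy

variable {α : Type*} [DecidableEq α]

/-- The unnormalised Dirichlet form of the basis exchange graph on `B`, in which every edge is
counted in both directions. -/
def exchangeEnergy (B : Finset (Finset α)) (f : Finset α → ℝ) : ℝ :=
  ∑ x ∈ B, ∑ y ∈ B with #(x \ y) = 1 ∧ #(y \ x) = 1, (f x - f y) ^ 2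

theorem exchangeEnergy_nonneg (B : Finset (Finset α)) (f : Finset α → ℝ) :
    0 ≤ exchangeEnergy B f :=
  sum_nonneg fun _ _ ↦ sum_nonneg fun _ _ ↦ sq_nonneg _

theorem exchangeEnergy_memberSubfamily (B : Finset (Finset α)) (e : α) (f : Finset α → ℝ) :
    exchangeEnergy (B.memberSubfamily e) (f <| insert e ·) =
      ∑ x ∈ B, ∑ y ∈ B with #(x \ y) = 1 ∧ #(y \ x) = 1,
        if e ∈ x ∩ y then (f x - f y) ^ 2 else 0 := by
  have h_sdiff {s : Finset α} (hs : s ∈ B.memberSubfamily e) (t : Finset α) :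
      s \ t = insert e s \ insert e t := by
    rw [insert_sdiff_insert, sdiff_insert, erase_eq_of_notMem]
    simp [(mem_memberSubfamily.1 hs).2]
  let F (x y : Finset α) : ℝ := if #(x \ y) = 1 ∧ #(y \ x) = 1 then (f x - f y) ^ 2 else 0
  calc exchangeEnergy (B.memberSubfamily e) (f <| insert e ·)
      = ∑ s ∈ B.memberSubfamily e, ∑ t ∈ B.memberSubfamily e, F (insert e s) (insert e t) := by
        simp only [exchangeEnergy, sum_filter, F]
        refine sum_congr rfl fun s hs ↦ sum_congr rfl fun t ht ↦ ?_
        rw [h_sdiff hs, h_sdiff ht]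
    _ = ∑ x ∈ B with e ∈ x, ∑ y ∈ B with e ∈ y, F x y := by
        simp only [sum_memberSubfamily]
        rw [sum_memberSubfamily (F := fun x ↦ ∑ y ∈ B with e ∈ y, F x y)]
    _ = _ := by
        simp only [sum_filter, F, mem_inter]
        refine sum_congr rfl fun x _ ↦ ?_
        by_cases hx : e ∈ x
        · simp only [hx, if_true, true_and]
          exact sum_congr rfl fun y _ ↦ by split_ifs <;> rfl
        · simp [hx]

theorem sum_exchangeEnergy_memberSubfamily {B : Finset (Finset α)} {r : ℕ}
    (hB : ∀ x ∈ B, #x = r) (f : Finset α → ℝ) :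
    ∑ e ∈ B.sup id, exchangeEnergy (B.memberSubfamily e) (f <| insert e ·) =
      (r - 1) * exchangeEnergy B f := by
  simp only [exchangeEnergy_memberSubfamily]
  rw [sum_comm, exchangeEnergy, mul_sum]
  refine sum_congr rfl fun x hx ↦ ?_
  rw [sum_comm, mul_sum]
  refine sum_congr rfl fun y hy ↦ ?_
  have h_inter : (#(x ∩ y) : ℝ) = r - 1 := by
    have := card_sdiff_add_card_inter x y
    rw [(mem_filter.1 hy).2.1, hB x hx] at this
    rw [← this]; push_cast; ring
  have h_subset : x ∩ y ⊆ B.sup id := inter_subset_left.trans (subset_sup_id hx)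
  rw [sum_ite_mem, inter_eq_right.2 h_subset, sum_const, nsmul_eq_mul, h_inter]

theorem exchangeEnergy_eq_of_card_eq_one {B : Finset (Finset α)} (hB : ∀ x ∈ B, #x = 1)
    (f : Finset α → ℝ) : exchangeEnergy B f = 2 * #B * sqDev B f := by
  rw [← sum_sum_sub_sq, exchangeEnergy]
  refine sum_congr rfl fun x hx ↦ ?_
  refine sum_subset (filter_subset _ _) fun y hy h_not ↦ ?_
  obtain rfl | hxy := eq_or_ne x y
  · simp
  obtain ⟨a, rfl⟩ := card_eq_one.1 (hB x hx)
  obtain ⟨b, rfl⟩ := card_eq_one.1 (hB y hy)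
  exact absurd (mem_filter.2 ⟨hy, by grind⟩) h_not

theorem four_mul_sqDev_le_exchangeEnergy_of_card_eq_one {B : Finset (Finset α)}
    (hB : ∀ x ∈ B, #x = 1) (f : Finset α → ℝ) : 4 * sqDev B f ≤ exchangeEnergy B f := by
  obtain h_card | h_card := le_or_gt #B 1
  · simp [sqDev_eq_zero_of_card_le_one h_card, exchangeEnergy_nonneg]
  have h_two : (2 : ℝ) ≤ #B := by exact_mod_cast h_card
  have h_nonneg := exchangeEnergy_nonneg B f
  rw [exchangeEnergy_eq_of_card_eq_one hB] at h_nonneg ⊢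
  have h_sqDev : 0 ≤ sqDev B f := nonneg_of_mul_nonneg_right h_nonneg (by positivity)
  nlinarith

end ExchangeEnergy

namespace IsBaseFamily

variable {α : Type*} [DecidableEq α] {B : Finset (Finset α)} {r : ℕ}

theorem sum_sq_sum_le_sum_sum_sq (hB : IsBaseFamily B (r + 2)) {g : α → ℝ}
    (hg : ∑ x ∈ B, ∑ e ∈ x, g e = 0) :
    ∑ x ∈ B, (∑ e ∈ x, g e) ^ 2 ≤ ∑ x ∈ B, ∑ e ∈ x, g e ^ 2 := by
  obtain rfl | hB_nonempty := B.eq_empty_or_nonempty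
  · simp
  have h_pair := hB.card_mul_sum_pairSum_le g
  rw [hg, sq, mul_zero, mul_zero] at h_pair
  have := nonpos_of_mul_nonpos_right h_pair (by positivity)
  simp only [sq_sum_eq_pairSum_add, sum_add_distrib]
  linarith

theorem sum_sq_sum_memberSubfamily_div_le (hB : IsBaseFamily B (r + 2)) {f : Finset α → ℝ}
    (hf : ∑ x ∈ B, f x = 0) :
    ∑ e ∈ B.sup id, (∑ s ∈ B.memberSubfamily e, f (insert e s)) ^ 2 / #(B.memberSubfamily e) ≤
      ∑ x ∈ B, f x ^ 2 := by
  -- Compare `f` with `x ↦ ∑ e ∈ x, g e`, where `g e` is the mean of `f` over the bases through `e`.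
  set N : α → ℝ := fun e ↦ #(B.memberSubfamily e)
  set S : α → ℝ := fun e ↦ ∑ s ∈ B.memberSubfamily e, f (insert e s)
  set g : α → ℝ := fun e ↦ S e / N e
  have h_count (F : α → Finset α → ℝ) :
      ∑ x ∈ B, ∑ e ∈ x, F e x = ∑ e ∈ B.sup id, ∑ s ∈ B.memberSubfamily e, F e (insert e s) :=
    (sum_sum_memberSubfamily_insert (fun _ ↦ subset_sup_id) F).symm
  have h_mul_cancel (e : α) (he : e ∈ B.sup id) : N e * g e = S e :=
    mul_div_cancel₀ _ (Nat.cast_ne_zero.2 (memberSubfamily_nonempty he).card_pos.ne')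
  have h_cross : ∑ x ∈ B, f x * ∑ e ∈ x, g e = ∑ e ∈ B.sup id, S e ^ 2 / N e := by
    simp only [mul_sum]
    rw [h_count fun e x ↦ f x * g e]
    refine sum_congr rfl fun e _ ↦ ?_
    rw [← sum_mul, sq, mul_div_assoc]
  have h_sq : ∑ x ∈ B, ∑ e ∈ x, g e ^ 2 = ∑ e ∈ B.sup id, S e ^ 2 / N e := by
    rw [h_count fun e _ ↦ g e ^ 2]
    refine sum_congr rfl fun e he ↦ ?_
    rw [sum_const, nsmul_eq_mul, sq, ← mul_assoc, h_mul_cancel e he, sq, mul_div_assoc]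
  have h_mean : ∑ x ∈ B, ∑ e ∈ x, g e = 0 := by
    rw [h_count fun e _ ↦ g e]
    simp only [sum_const, nsmul_eq_mul]
    rw [sum_congr rfl h_mul_cancel, ← h_count fun _ x ↦ f x,
      sum_congr rfl fun x hx ↦ by rw [sum_const, hB.card_eq x hx], ← smul_sum, hf, smul_zero]
  have h_expand : ∑ x ∈ B, (f x - ∑ e ∈ x, g e) ^ 2 =
      ∑ x ∈ B, f x ^ 2 - 2 * ∑ x ∈ B, f x * ∑ e ∈ x, g e + ∑ x ∈ B, (∑ e ∈ x, g e) ^ 2 := by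
    simp only [sub_sq, sum_add_distrib, sum_sub_distrib, mul_sum, mul_assoc]
  have h_nonneg : 0 ≤ ∑ x ∈ B, (f x - ∑ e ∈ x, g e) ^ 2 := sum_nonneg fun x _ ↦ sq_nonneg _
  linarith [hB.sum_sq_sum_le_sum_sum_sq h_mean]

theorem mul_sqDev_le_sum_sqDev (hB : IsBaseFamily B (r + 2)) (f : Finset α → ℝ) :
    (r + 1) * sqDev B f ≤ ∑ e ∈ B.sup id, sqDev (B.memberSubfamily e) (f <| insert e ·) := by
  wlog hf : ∑ x ∈ B, f x = 0 generalizing f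
  · obtain rfl | hB_nonempty := B.eq_empty_or_nonempty
    · simp [sqDev]
    have h_card : (#B : ℝ) ≠ 0 := by positivity
    simpa only [sqDev_sub_const, sqDev_sub_const (B.memberSubfamily _) (f <| insert _ ·)] using
      this (fun x ↦ f x - (∑ x ∈ B, f x) / #B) (by
        rw [sum_sub_distrib, sum_const, nsmul_eq_mul]; field_simp; ring)
  have h_sq : ∑ e ∈ B.sup id, ∑ s ∈ B.memberSubfamily e, f (insert e s) ^ 2 =
      (r + 2) * ∑ x ∈ B, f x ^ 2 := by
    rw [sum_sum_memberSubfamily_insert (fun _ ↦ subset_sup_id) fun _ x ↦ f x ^ 2, mul_sum]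
    refine sum_congr rfl fun x hx ↦ ?_
    rw [sum_const, hB.card_eq x hx, nsmul_eq_mul]
    push_cast
    rfl
  have := hB.sum_sq_sum_memberSubfamily_div_le hf
  simp only [sqDev, sum_sub_distrib, h_sq, hf]
  rw [sq (0 : ℝ), zero_mul, zero_div, sub_zero]
  linarith

end IsBaseFamily

theorem dyck_poincare_general {α : Type*} [DecidableEq α] {B : Finset (Finset α)} {r : ℕ}
    (hB : IsBaseFamily B r) (f : Finset α → ℝ) : 4 * sqDev B f ≤ exchangeEnergy B f := by
  induction r generalizing B f with
  | zero =>
    have h_card : #B ≤ 1 := card_le_one.2 fun x hx y hy ↦ by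
      rw [card_eq_zero.1 (hB.card_eq x hx), card_eq_zero.1 (hB.card_eq y hy)]
    rw [sqDev_eq_zero_of_card_le_one h_card, mul_zero]
    exact exchangeEnergy_nonneg B f
  | succ r ih =>
    obtain rfl | r := r
    · exact four_mul_sqDev_le_exchangeEnergy_of_card_eq_one hB.card_eq f
    · have h_var := hB.mul_sqDev_le_sum_sqDev f
      have h_energy := sum_exchangeEnergy_memberSubfamily hB.card_eq f
      have h_link := sum_le_sum fun e (_ : e ∈ B.sup id) ↦
        ih (hB.memberSubfamily e) (f <| insert e ·)
      rw [← mul_sum, h_energy] at h_link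
      push_cast at h_link
      refine le_of_mul_le_mul_left (a := (r + 1 : ℝ)) ?_ (by positivity)
      linarith

theorem card_insert_erase {α : Type*} [DecidableEq α] {x : Finset α} {a b : α} (ha : a ∉ x)
    (hb : b ∈ x) : #(insert a (x.erase b)) = #x := by
  rw [card_insert_of_notMem (mt mem_of_mem_erase ha), card_erase_add_one hb]

theorem min_card_filter_le_card_filter_insert_erase {α : Type*} [LinearOrder α] {x y : Finset α}
    (h_card : #y ≤ #x) {a b : α} (ha : a ∈ y \ x) (hb : b ∈ x) (hb_max : ∀ c ∈ x \ y, c ≤ b)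
    (k : α) :
    min #{i ∈ x | i ≤ k} #{i ∈ y | i ≤ k} ≤ #{i ∈ insert a (x.erase b) | i ≤ k} := by
  rw [mem_sdiff] at ha
  obtain hkb | hbk := lt_or_ge k b
  · exact min_le_of_left_le <| card_le_card fun i ↦ by grind
  · refine min_le_of_right_le ?_
    have h_tail (c : α) (hc : c ∈ x) (hkc : ¬ c ≤ k) : c ∈ y :=
      by_contra fun hcy ↦ hkc ((hb_max c (mem_sdiff.2 ⟨hc, hcy⟩)).trans hbk)
    have h_above : #{i ∈ insert a (x.erase b) | ¬ i ≤ k} ≤ #{i ∈ y | ¬ i ≤ k} :=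
      card_le_card fun i ↦ by grind
    have h_y := card_filter_add_card_filter_not (s := y) (· ≤ k)
    have h_z := card_filter_add_card_filter_not (s := insert a (x.erase b)) (· ≤ k)
    rw [card_insert_erase ha.2 hb] at h_z
    omega

theorem mem_dyck {n : ℕ} {x : Finset ℕ} :
    x ∈ dyck n ↔ x ⊆ Icc 1 (2 * n) ∧ #x = n ∧ ∀ k ∈ Icc 1 (2 * n), k ≤ 2 * #{i ∈ x | i ≤ k} := by
  simp only [dyck, mem_filter, mem_powerset]
  refine and_congr_right fun hx ↦ and_congr_right fun _ ↦ forall₂_congr fun k _ ↦ ?_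
  have : x ∩ Icc 1 k = {i ∈ x | i ≤ k} := by
    ext i
    have (hi : i ∈ x) := mem_Icc.1 (hx hi)
    grind
  rw [this]

theorem dyck_isBaseFamily (n : ℕ) : IsBaseFamily (dyck n) n where
  card_eq x hx := (mem_dyck.1 hx).2.1
  exchange x hx y hy a ha := by
    rw [mem_dyck] at hx hy
    obtain ⟨hx_sub, hx_card, hx_prefix⟩ := hx
    obtain ⟨hy_sub, hy_card, hy_prefix⟩ := hy
    have h_nonempty : (x \ y).Nonempty := by
      rw [← card_pos, card_sdiff_comm (hx_card.trans hy_card.symm)]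
      exact card_pos.2 ⟨a, ha⟩
    have hb := max'_mem _ h_nonempty
    have hbx := (mem_sdiff.1 hb).1
    have ha' := mem_sdiff.1 ha
    refine ⟨(x \ y).max' h_nonempty, hb, mem_dyck.2 ⟨?_, ?_, fun k hk ↦ ?_⟩⟩
    · exact insert_subset (hy_sub ha'.1) ((erase_subset _ _).trans hx_sub)
    · rw [card_insert_erase ha'.2 hbx, hx_card]
    · have := min_card_filter_le_card_filter_insert_erase (hy_card.trans hx_card.symm).le ha hbx
        (fun c hc ↦ le_max' _ c hc) k
      have := hx_prefix k hk
      have := hy_prefix k hk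
      omega

theorem dyckVar_eq (n : ℕ) (f : Finset ℕ → ℝ) : dyckVar n f = dyckPi n * sqDev (dyck n) f := by
  simp only [dyckVar, dyckPi, sqDev, ← sum_mul]
  ring

theorem dyckDirichlet_eq (n : ℕ) (f : Finset ℕ → ℝ) :
    dyckDirichlet n f = dyckPi n / (4 * n ^ 2) * exchangeEnergy (dyck n) f := by
  have h_term (x y : Finset ℕ) : (f x - f y) ^ 2 * dyckP n x y * dyckPi n =
      dyckPi n / (2 * n ^ 2) * if #(x \ y) = 1 ∧ #(y \ x) = 1 then (f x - f y) ^ 2 else 0 := by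
    obtain rfl | hxy := eq_or_ne x y
    · simp
    · rw [dyckP, if_neg hxy, dyckStep]
      split_ifs <;> ring
  simp only [dyckDirichlet, exchangeEnergy, sum_filter, h_term, ← mul_sum]
  ring

/-- Poincaré inequality for the Dyck random transposition chain: the spectral
gap is at least `1/n²`, i.e. `𝓔(f,f) ≥ (1/n²)·Var_π(f)` for all `f`. -/
theorem dyck_poincare (n : ℕ) (hn : 1 ≤ n) (f : Finset ℕ → ℝ) :
    dyckDirichlet n f ≥ (1 / (n : ℝ) ^ 2) * dyckVar n f := by
  have h_general := dyck_poincare_general (dyck_isBaseFamily n) f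
  have h_pi : 0 ≤ dyckPi n := inv_nonneg.2 (Nat.cast_nonneg _)
  rw [ge_iff_le, dyckDirichlet_eq, dyckVar_eq]
  calc 1 / (n : ℝ) ^ 2 * (dyckPi n * sqDev (dyck n) f)
      = dyckPi n / (4 * n ^ 2) * (4 * sqDev (dyck n) f) := by ring
    _ ≤ dyckPi n / (4 * n ^ 2) * exchangeEnergy (dyck n) f := by gcongr
end

section
/- Logarithmic Sobolev inequality for the Dyck random transposition chain (log-Sobolev constant at least 1/(4n²)): for every n ≥ 1 and every function f : 𝓓(n) → ℝ that is not identically zero, 𝓔(f,f) ≥ (1/(4n²)) · 𝓛_π(f). -/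
open scoped Classical

/-- The entropy functional `𝓛_π(f)` for the uniform distribution on `𝓓(n)`. -/
noncomputable def dyckEnt (n : ℕ) (f : Finset ℕ → ℝ) : ℝ :=
  ∑ x ∈ dyck n,
    f x ^ 2 * (Real.log (f x ^ 2) - Real.log (∑ y ∈ dyck n, f y ^ 2 * dyckPi n)) *
      dyckPi n

/-! Condition a ballot path on its last step: the paths of length `N + 1` with `k + 1` up-steps
split into those of length `N` with `k + 1` and with `k` up-steps. By the two-point entropy
inequality, the entropy lost in this decomposition is at most the squared difference of the
quadratic means of `f` over the two parts, times the number of paths. That is in turn at most the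
energy of the exchanges involving the last step, because the uniform measures on the two parts admit
a coupling `(x, y)` with `y ⊆ x`. The coupling is built along the same recursion, in which
log-concavity of the ballot numbers is exactly what makes the weights nonnegative. By induction on
`N`, the unnormalised entropy is at most the unnormalised Dirichlet form for all `N` and `k`. -/

section

open Finset Real

variable {ι κ : Type*}

section Coupling

/-- A coupling of the uniform measures on `s` and `t` supported on pairs related by `r`. The weight
is scaled by `#s * #t`, so that its marginals are the constants `#t` and `#s`. -/
structure IsCoupling (r : ι → κ → Prop) (s : Finset ι) (t : Finset κ) (w : ι → κ → ℝ) : Prop where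
  nonneg : ∀ x ∈ s, ∀ y ∈ t, 0 ≤ w x y
  rel : ∀ x ∈ s, ∀ y ∈ t, w x y ≠ 0 → r x y
  sum_right : ∀ x ∈ s, ∑ y ∈ t, w x y = #t
  sum_left : ∀ y ∈ t, ∑ x ∈ s, w x y = #s

/-- The quadratic mean of `f` over `s`. -/
noncomputable def rms (s : Finset ι) (f : ι → ℝ) : ℝ :=
  √((∑ x ∈ s, f x ^ 2) / #s)

theorem rms_nonneg (s : Finset ι) (f : ι → ℝ) : 0 ≤ rms s f :=
  sqrt_nonneg _

theorem rms_sq (s : Finset ι) (f : ι → ℝ) : rms s f ^ 2 = (∑ x ∈ s, f x ^ 2) / #s :=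
  sq_sqrt (by positivity)

theorem card_mul_rms_sq (s : Finset ι) (f : ι → ℝ) : #s * rms s f ^ 2 = ∑ x ∈ s, f x ^ 2 := by
  rcases s.eq_empty_or_nonempty with rfl | hs
  · simp
  · rw [rms_sq, mul_div_cancel₀ _ (by simpa using hs.ne_empty)]

theorem sq_sqrt_sum_sub_sqrt_sum_le (s : Finset ι) {w : ι → ℝ} (hw : ∀ x ∈ s, 0 ≤ w x)
    (u v : ι → ℝ) :
    (√(∑ x ∈ s, w x * u x ^ 2) - √(∑ x ∈ s, w x * v x ^ 2)) ^ 2 ≤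
      ∑ x ∈ s, w x * (u x - v x) ^ 2 := by
  have nonneg (f : ι → ℝ) : 0 ≤ ∑ x ∈ s, w x * f x ^ 2 :=
    sum_nonneg fun x hx ↦ mul_nonneg (hw x hx) (sq_nonneg _)
  have cauchySchwarz : ∑ x ∈ s, w x * (u x * v x) ≤
      √(∑ x ∈ s, w x * u x ^ 2) * √(∑ x ∈ s, w x * v x ^ 2) := by
    convert sum_mul_le_sqrt_mul_sqrt s (fun x ↦ √(w x) * u x) (fun x ↦ √(w x) * v x) using 1
    · refine sum_congr rfl fun x hx ↦ ?_
      linear_combination -(u x * v x) * sq_sqrt (hw x hx)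
    · congr 2 <;>
      · refine sum_congr rfl fun x hx ↦ ?_
        rw [mul_pow, sq_sqrt (hw x hx)]
  have expand : ∑ x ∈ s, w x * (u x - v x) ^ 2 = ∑ x ∈ s, w x * u x ^ 2
      - 2 * ∑ x ∈ s, w x * (u x * v x) + ∑ x ∈ s, w x * v x ^ 2 := by
    simp only [mul_sum, ← sum_sub_distrib, ← sum_add_distrib]
    exact sum_congr rfl fun x _ ↦ by ring
  rw [expand, sub_sq, sq_sqrt (nonneg u), sq_sqrt (nonneg v)]
  linarith

namespace IsCoupling

variable {r : ι → κ → Prop} {s : Finset ι} {t : Finset κ} {w : ι → κ → ℝ}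

theorem swap (hw : IsCoupling r s t w) :
    IsCoupling (fun y x ↦ r x y) t s (fun y x ↦ w x y) where
  nonneg y hy x hx := hw.nonneg x hx y hy
  rel y hy x hx := hw.rel x hx y hy
  sum_right := hw.sum_left
  sum_left := hw.sum_right

theorem zero (h : s = ∅ ∨ t = ∅) : IsCoupling r s t 0 := by
  rcases h with rfl | rfl <;> constructor <;> simp

theorem le_card_right (hw : IsCoupling r s t w) {x : ι} {y : κ} (hx : x ∈ s) (hy : y ∈ t) :
    w x y ≤ #t := by
  rw [← hw.sum_right x hx]
  exact single_le_sum (f := w x) (hw.nonneg x hx) hy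

theorem sum_mul_sq_left (hw : IsCoupling r s t w) (f : ι → ℝ) :
    ∑ p ∈ s ×ˢ t, w p.1 p.2 * f p.1 ^ 2 = #s * #t * rms s f ^ 2 := by
  rw [mul_right_comm, card_mul_rms_sq, sum_product, sum_mul]
  refine sum_congr rfl fun x hx ↦ ?_
  rw [← hw.sum_right x hx, mul_comm, sum_mul]

theorem sum_mul_sq_right (hw : IsCoupling r s t w) (g : κ → ℝ) :
    ∑ p ∈ s ×ˢ t, w p.1 p.2 * g p.2 ^ 2 = #s * #t * rms t g ^ 2 := by
  rw [sum_product_right, mul_comm (#s : ℝ), ← hw.swap.sum_mul_sq_left, sum_product]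

theorem card_mul_card_mul_sq_rms_sub_le (hw : IsCoupling r s t w) (f : ι → ℝ) (g : κ → ℝ) :
    #s * #t * (rms s f - rms t g) ^ 2 ≤ ∑ x ∈ s, ∑ y ∈ t, w x y * (f x - g y) ^ 2 := by
  have h := sq_sqrt_sum_sub_sqrt_sum_le (s ×ˢ t) (w := fun p ↦ w p.1 p.2)
    (fun p hp ↦ hw.nonneg _ (mem_product.1 hp).1 _ (mem_product.1 hp).2)
    (fun p ↦ f p.1) (fun p ↦ g p.2)
  have card_nonneg : (0 : ℝ) ≤ #s * #t := by positivity
  rwa [hw.sum_mul_sq_left, hw.sum_mul_sq_right, sqrt_mul card_nonneg, sqrt_mul card_nonneg,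
    sqrt_sq (rms_nonneg s f), sqrt_sq (rms_nonneg t g), ← mul_sub, mul_pow, sq_sqrt card_nonneg,
    sum_product] at h

variable [DecidableRel r]

theorem card_left_mul_sq_rms_sub_le (hw : IsCoupling r s t w) (ht : t.Nonempty)
    (f : ι → ℝ) (g : κ → ℝ) :
    #s * (rms s f - rms t g) ^ 2 ≤ ∑ x ∈ s, ∑ y ∈ t, if r x y then (f x - g y) ^ 2 else 0 := by
  have ht' : (0 : ℝ) < #t := by exact_mod_cast ht.card_pos
  refine le_of_mul_le_mul_left ?_ ht'
  calc #t * (#s * (rms s f - rms t g) ^ 2)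
      = #s * #t * (rms s f - rms t g) ^ 2 := by ring
    _ ≤ ∑ x ∈ s, ∑ y ∈ t, w x y * (f x - g y) ^ 2 := hw.card_mul_card_mul_sq_rms_sub_le f g
    _ ≤ ∑ x ∈ s, ∑ y ∈ t, #t * (if r x y then (f x - g y) ^ 2 else 0) := by
        refine sum_le_sum fun x hx ↦ sum_le_sum fun y hy ↦ ?_
        split_ifs with h
        · exact mul_le_mul_of_nonneg_right (hw.le_card_right hx hy) (sq_nonneg _)
        · rw [not_imp_comm.1 (hw.rel x hx y hy) h, zero_mul, mul_zero]
    _ = #t * ∑ x ∈ s, ∑ y ∈ t, (if r x y then (f x - g y) ^ 2 else 0) := by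
        simp only [mul_sum]

theorem card_add_card_mul_sq_rms_sub_le (hw : IsCoupling r s t w) (hs : s.Nonempty)
    (ht : t.Nonempty) (f : ι → ℝ) (g : κ → ℝ) :
    (#s + #t) * (rms s f - rms t g) ^ 2 ≤
      2 * ∑ x ∈ s, ∑ y ∈ t, if r x y then (f x - g y) ^ 2 else 0 := by
  have left := hw.card_left_mul_sq_rms_sub_le ht f g
  have right := hw.swap.card_left_mul_sq_rms_sub_le hs g f
  rw [sum_comm] at right
  simp only [sub_sq_comm (g _), sub_sq_comm (rms t g)] at right
  linarith

end IsCoupling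

end Coupling

section Entropy

/-- The entropy of `f ^ 2` with respect to the uniform measure on `s`, multiplied by `#s`. -/
noncomputable def sqEntropy (s : Finset ι) (f : ι → ℝ) : ℝ :=
  ∑ x ∈ s, f x ^ 2 * (log (f x ^ 2) - log (rms s f ^ 2))

theorem sqEntropy_eq (s : Finset ι) (f : ι → ℝ) :
    sqEntropy s f = ∑ x ∈ s, f x ^ 2 * log (f x ^ 2) - #s * rms s f ^ 2 * log (rms s f ^ 2) := by
  simp only [sqEntropy, mul_sub, sum_sub_distrib, ← sum_mul, card_mul_rms_sq]

theorem mul_log_sub_log_le {x m : ℝ} (hx : 0 ≤ x) (hm : 0 < m) :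
    x * (log x - log m) ≤ x * (x / m - 1) := by
  rcases hx.eq_or_lt with rfl | hx
  · simp
  · rw [← log_div hx.ne' hm.ne']
    exact mul_le_mul_of_nonneg_left (log_le_sub_one_of_pos (by positivity)) hx.le

theorem two_point_entropy_le {a b s t m : ℝ} (ha : 0 < a) (hb : 0 < b)
    (hm : (a + b) * m = a * s ^ 2 + b * t ^ 2) :
    a * s ^ 2 * (log (s ^ 2) - log m) + b * t ^ 2 * (log (t ^ 2) - log m) ≤
      (a + b) * (s - t) ^ 2 := by
  have hm_nonneg : 0 ≤ m := by
    refine nonneg_of_mul_nonneg_right ?_ (add_pos ha hb)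
    rw [hm]
    positivity
  rcases hm_nonneg.eq_or_lt with rfl | hm_pos
  · have hs : s ^ 2 = 0 := by nlinarith [sq_nonneg s, sq_nonneg t]
    have ht : t ^ 2 = 0 := by nlinarith [sq_nonneg s, sq_nonneg t]
    simp only [hs, ht, mul_zero, zero_mul, add_zero]
    positivity
  have chiSq : a * (s ^ 2 * (s ^ 2 / m - 1)) + b * (t ^ 2 * (t ^ 2 / m - 1)) =
      a * b * (s + t) ^ 2 * (s - t) ^ 2 / ((a + b) * m) := by
    field_simp
    linear_combination -(a * s ^ 2 + b * t ^ 2) * hm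
  have cauchySchwarz : a * b * (s + t) ^ 2 ≤ (a + b) * ((a + b) * m) := by
    nlinarith [sq_nonneg (a * s - b * t)]
  calc a * s ^ 2 * (log (s ^ 2) - log m) + b * t ^ 2 * (log (t ^ 2) - log m)
      = a * (s ^ 2 * (log (s ^ 2) - log m)) + b * (t ^ 2 * (log (t ^ 2) - log m)) := by ring
    _ ≤ a * (s ^ 2 * (s ^ 2 / m - 1)) + b * (t ^ 2 * (t ^ 2 / m - 1)) := by
        gcongr a * ?_ + b * ?_ <;> exact mul_log_sub_log_le (sq_nonneg _) hm_pos
    _ = a * b * (s + t) ^ 2 * (s - t) ^ 2 / ((a + b) * m) := chiSq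
    _ ≤ (a + b) * (s - t) ^ 2 := by
        rw [div_le_iff₀ (by positivity), mul_right_comm (a + b)]
        exact mul_le_mul_of_nonneg_right cauchySchwarz (sq_nonneg _)

end Entropy

section Subfamily

variable {α : Type*} [DecidableEq α] {a : α} {𝒜 ℬ : Finset (Finset α)}

theorem sum_eq_sum_nonMemberSubfamily_add_sum_memberSubfamily {M : Type*} [AddCommMonoid M]
    (a : α) (𝒜 : Finset (Finset α)) (F : Finset α → M) :
    ∑ S ∈ 𝒜, F S =
      ∑ S ∈ 𝒜.nonMemberSubfamily a, F S + ∑ S ∈ 𝒜.memberSubfamily a, F (insert a S) := by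
  rw [← sum_filter_not_add_sum_filter 𝒜 (a ∈ ·), nonMemberSubfamily, memberSubfamily,
    sum_image ((erase_injOn' a).mono (by simp))]
  congr 1
  exact sum_congr rfl fun S hS ↦ by rw [insert_erase (mem_filter.1 hS).2]

theorem forall_mem_iff_nonMemberSubfamily_and_memberSubfamily (a : α) (𝒜 : Finset (Finset α))
    (p : Finset α → Prop) :
    (∀ S ∈ 𝒜, p S) ↔
      (∀ S ∈ 𝒜.nonMemberSubfamily a, p S) ∧ ∀ S ∈ 𝒜.memberSubfamily a, p (insert a S) := by
  simp only [mem_nonMemberSubfamily, mem_memberSubfamily]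
  refine ⟨fun h ↦ ⟨fun S hS ↦ h S hS.1, fun S hS ↦ h _ hS.1⟩, fun ⟨hN, hM⟩ S hS ↦ ?_⟩
  by_cases ha : a ∈ S
  · rw [← insert_erase ha] at hS ⊢
    exact hM _ ⟨hS, notMem_erase a S⟩
  · exact hN S ⟨hS, ha⟩

theorem notMem_of_mem_memberSubfamily {S : Finset α} (hS : S ∈ 𝒜.memberSubfamily a) : a ∉ S :=
  (mem_memberSubfamily.1 hS).2

theorem notMem_of_mem_nonMemberSubfamily {S : Finset α} (hS : S ∈ 𝒜.nonMemberSubfamily a) :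
    a ∉ S :=
  (mem_nonMemberSubfamily.1 hS).2

theorem card_mul_rms_sq_eq_add (a : α) (𝒜 : Finset (Finset α)) (f : Finset α → ℝ) :
    #𝒜 * rms 𝒜 f ^ 2 = #(𝒜.nonMemberSubfamily a) * rms (𝒜.nonMemberSubfamily a) f ^ 2 +
      #(𝒜.memberSubfamily a) * rms (𝒜.memberSubfamily a) (fun S ↦ f (insert a S)) ^ 2 := by
  simp only [card_mul_rms_sq]
  exact sum_eq_sum_nonMemberSubfamily_add_sum_memberSubfamily a 𝒜 _

theorem sqEntropy_le_add_sq_rms_sub (f : Finset α → ℝ) (hN : (𝒜.nonMemberSubfamily a).Nonempty)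
    (hM : (𝒜.memberSubfamily a).Nonempty) :
    sqEntropy 𝒜 f ≤ sqEntropy (𝒜.nonMemberSubfamily a) f +
      sqEntropy (𝒜.memberSubfamily a) (fun S ↦ f (insert a S)) +
      (#(𝒜.nonMemberSubfamily a) + #(𝒜.memberSubfamily a)) *
        (rms (𝒜.nonMemberSubfamily a) f -
          rms (𝒜.memberSubfamily a) (fun S ↦ f (insert a S))) ^ 2 := by
  have card_eq : (#𝒜 : ℝ) = #(𝒜.nonMemberSubfamily a) + #(𝒜.memberSubfamily a) := by
    rw [← card_memberSubfamily_add_card_nonMemberSubfamily a 𝒜, add_comm, Nat.cast_add]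
  have mean := card_mul_rms_sq_eq_add a 𝒜 f
  have two_point := two_point_entropy_le (by exact_mod_cast hN.card_pos)
    (by exact_mod_cast hM.card_pos) (card_eq ▸ mean)
  simp only [sqEntropy_eq, mean,
    sum_eq_sum_nonMemberSubfamily_add_sum_memberSubfamily a 𝒜 fun S ↦ f S ^ 2 * log (f S ^ 2)]
  linarith

theorem sqEntropy_le_add_of_isCoupling (f : Finset α → ℝ) {w : Finset α → Finset α → ℝ}
    (hw : IsCoupling (· ⊇ ·) (𝒜.nonMemberSubfamily a) (𝒜.memberSubfamily a) w) :
    sqEntropy 𝒜 f ≤ sqEntropy (𝒜.nonMemberSubfamily a) f +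
      sqEntropy (𝒜.memberSubfamily a) (fun S ↦ f (insert a S)) +
      2 * ∑ x ∈ 𝒜.nonMemberSubfamily a, ∑ y ∈ 𝒜.memberSubfamily a,
        if y ⊆ x then (f x - f (insert a y)) ^ 2 else 0 := by
  rcases (𝒜.nonMemberSubfamily a).eq_empty_or_nonempty with hN | hN
  · simp [sqEntropy, rms, sum_eq_sum_nonMemberSubfamily_add_sum_memberSubfamily a 𝒜,
      ← card_memberSubfamily_add_card_nonMemberSubfamily a 𝒜, hN]
  rcases (𝒜.memberSubfamily a).eq_empty_or_nonempty with hM | hM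
  · simp [sqEntropy, rms, sum_eq_sum_nonMemberSubfamily_add_sum_memberSubfamily a 𝒜,
      ← card_memberSubfamily_add_card_nonMemberSubfamily a 𝒜, hM]
  · exact (sqEntropy_le_add_sq_rms_sub f hN hM).trans <| add_le_add_right
      (hw.card_add_card_mul_sq_rms_sub_le hN hM f fun S ↦ f (insert a S)) _

/-- `x` and `y` differ by exchanging one element. -/
def IsExchange (x y : Finset α) : Prop :=
  #(x \ y) = 1 ∧ #(y \ x) = 1

instance : DecidableRel (IsExchange (α := α)) :=
  fun x y ↦ inferInstanceAs (Decidable (#(x \ y) = 1 ∧ #(y \ x) = 1))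

theorem IsExchange.symm {x y : Finset α} (h : IsExchange x y) : IsExchange y x :=
  And.symm h

theorem isExchange_insert_of_subset {x y : Finset α} (hx : a ∉ x) (hyx : y ⊆ x)
    (hcard : #x = #y + 1) : IsExchange x (insert a y) := by
  constructor
  · rw [sdiff_insert_of_notMem hx, card_sdiff_of_subset hyx, hcard, Nat.add_sub_cancel_left]
  · rw [insert_sdiff_of_notMem _ hx, sdiff_eq_empty_iff_subset.2 hyx, insert_empty,
      card_singleton]

theorem isExchange_insert_insert_iff {x y : Finset α} (hx : a ∉ x) (hy : a ∉ y) :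
    IsExchange (insert a x) (insert a y) ↔ IsExchange x y := by
  simp only [IsExchange, insert_sdiff_insert, sdiff_insert_of_notMem hx,
    sdiff_insert_of_notMem hy]

/-- The Dirichlet form of the walk on `𝒜` performing each admissible exchange at rate `1`, without
the normalisation `1 / (2 * #𝒜)`. -/
def exchangeForm (𝒜 : Finset (Finset α)) (f : Finset α → ℝ) : ℝ :=
  ∑ x ∈ 𝒜, ∑ y ∈ 𝒜, if IsExchange x y then (f x - f y) ^ 2 else 0

theorem exchangeForm_eq_add (a : α) (𝒜 : Finset (Finset α)) (f : Finset α → ℝ) :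
    exchangeForm 𝒜 f = exchangeForm (𝒜.nonMemberSubfamily a) f +
      exchangeForm (𝒜.memberSubfamily a) (fun S ↦ f (insert a S)) +
      2 * ∑ x ∈ 𝒜.nonMemberSubfamily a, ∑ y ∈ 𝒜.memberSubfamily a,
        if IsExchange x (insert a y) then (f x - f (insert a y)) ^ 2 else 0 := by
  have member : exchangeForm (𝒜.memberSubfamily a) (fun S ↦ f (insert a S)) =
      ∑ x ∈ 𝒜.memberSubfamily a, ∑ y ∈ 𝒜.memberSubfamily a,
        if IsExchange (insert a x) (insert a y) then (f (insert a x) - f (insert a y)) ^ 2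
        else 0 :=
    sum_congr rfl fun x hx ↦ sum_congr rfl fun y hy ↦ if_congr
      (isExchange_insert_insert_iff (notMem_of_mem_memberSubfamily hx)
        (notMem_of_mem_memberSubfamily hy)).symm rfl rfl
  have cross : ∑ y ∈ 𝒜.memberSubfamily a, ∑ x ∈ 𝒜.nonMemberSubfamily a,
        (if IsExchange (insert a y) x then (f (insert a y) - f x) ^ 2 else 0) =
      ∑ x ∈ 𝒜.nonMemberSubfamily a, ∑ y ∈ 𝒜.memberSubfamily a,
        if IsExchange x (insert a y) then (f x - f (insert a y)) ^ 2 else 0 := by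
    rw [sum_comm]
    exact sum_congr rfl fun x _ ↦ sum_congr rfl fun y _ ↦
      if_congr ⟨IsExchange.symm, IsExchange.symm⟩ (sub_sq_comm _ _) rfl
  rw [member, exchangeForm, exchangeForm]
  simp only [sum_eq_sum_nonMemberSubfamily_add_sum_memberSubfamily a 𝒜, sum_add_distrib, cross]
  ring

theorem add_sum_superset_le_exchangeForm {k : ℕ} (h𝒜 : (𝒜 : Set (Finset α)).Sized k)
    (f : Finset α → ℝ) :
    exchangeForm (𝒜.nonMemberSubfamily a) f +
        exchangeForm (𝒜.memberSubfamily a) (fun S ↦ f (insert a S)) +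
        2 * ∑ x ∈ 𝒜.nonMemberSubfamily a, ∑ y ∈ 𝒜.memberSubfamily a,
          (if y ⊆ x then (f x - f (insert a y)) ^ 2 else 0) ≤
      exchangeForm 𝒜 f := by
  rw [exchangeForm_eq_add a 𝒜 f]
  gcongr with x hx y hy
  obtain ⟨hx, hax⟩ := mem_nonMemberSubfamily.1 hx
  obtain ⟨hy, hay⟩ := mem_memberSubfamily.1 hy
  by_cases hyx : y ⊆ x
  · have hcard : #x = #y + 1 := by rw [h𝒜 hx, ← h𝒜 hy, card_insert_of_notMem hay]
    rw [if_pos hyx, if_pos (isExchange_insert_of_subset hax hyx hcard)]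
  · rw [if_neg hyx]
    split_ifs <;> positivity

theorem sqEntropy_le_exchangeForm_of_isCoupling {k : ℕ} (h𝒜 : (𝒜 : Set (Finset α)).Sized k)
    {w : Finset α → Finset α → ℝ}
    (hw : IsCoupling (· ⊇ ·) (𝒜.nonMemberSubfamily a) (𝒜.memberSubfamily a) w)
    (hN : ∀ f, sqEntropy (𝒜.nonMemberSubfamily a) f ≤ exchangeForm (𝒜.nonMemberSubfamily a) f)
    (hM : ∀ f, sqEntropy (𝒜.memberSubfamily a) f ≤ exchangeForm (𝒜.memberSubfamily a) f)
    (f : Finset α → ℝ) : sqEntropy 𝒜 f ≤ exchangeForm 𝒜 f := by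
  have entropy_le := sqEntropy_le_add_of_isCoupling f hw
  have le_form := add_sum_superset_le_exchangeForm (a := a) h𝒜 f
  linarith [hN f, hM fun S ↦ f (insert a S)]

/-- Weight on pairs of sets obtained from weights `u` on the pairs containing `a` and `v` on the
pairs avoiding `a`, together with a diagonal weight on the pairs `(insert a x, x)`. When the three
blocks carry families of sizes `A`, `B`, `C` as in `IsCoupling.glue`, the factors are the ones for
which all rows sum to `A + B` and all columns to `B + C`. -/
noncomputable def glueWeight (a : α) (A B C : ℝ) (u v : Finset α → Finset α → ℝ)
    (x y : Finset α) : ℝ :=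
  if a ∈ x then
    if a ∈ y then (B + C) / B * u (x.erase a) (y.erase a)
    else if x.erase a = y then B - A * C / B else 0
  else if a ∈ y then 0 else (A + B) / B * v x y

section GlueWeight

variable {A B C : ℝ} {u v : Finset α → Finset α → ℝ} {x y : Finset α}

theorem glueWeight_insert_insert (hx : a ∉ x) (hy : a ∉ y) :
    glueWeight a A B C u v (insert a x) (insert a y) = (B + C) / B * u x y := by
  simp [glueWeight, erase_insert hx, erase_insert hy]

theorem glueWeight_insert_left (hx : a ∉ x) (hy : a ∉ y) :
    glueWeight a A B C u v (insert a x) y = if x = y then B - A * C / B else 0 := by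
  simp [glueWeight, erase_insert hx, hy]

theorem glueWeight_insert_right (hx : a ∉ x) :
    glueWeight a A B C u v x (insert a y) = 0 := by
  simp [glueWeight, hx]

theorem glueWeight_of_notMem (hx : a ∉ x) (hy : a ∉ y) :
    glueWeight a A B C u v x y = (A + B) / B * v x y := by
  simp [glueWeight, hx, hy]

theorem glueWeight_nonneg (hA : 0 ≤ A) (hB : 0 ≤ B) (hC : 0 ≤ C) (hAC : A * C ≤ B * B)
    (hu : ∀ x ∈ 𝒜.memberSubfamily a, ∀ y ∈ ℬ.memberSubfamily a, 0 ≤ u x y)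
    (hv : ∀ x ∈ 𝒜.nonMemberSubfamily a, ∀ y ∈ ℬ.nonMemberSubfamily a, 0 ≤ v x y) :
    ∀ x ∈ 𝒜, ∀ y ∈ ℬ, 0 ≤ glueWeight a A B C u v x y := by
  simp only [forall_mem_iff_nonMemberSubfamily_and_memberSubfamily a 𝒜,
    forall_mem_iff_nonMemberSubfamily_and_memberSubfamily a ℬ]
  refine ⟨fun x hx ↦ ⟨fun y hy ↦ ?_, fun y _ ↦ ?_⟩, fun x hx ↦ ⟨fun y hy ↦ ?_, fun y hy ↦ ?_⟩⟩
  · rw [glueWeight_of_notMem (notMem_of_mem_nonMemberSubfamily hx)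
      (notMem_of_mem_nonMemberSubfamily hy)]
    exact mul_nonneg (by positivity) (hv x hx y hy)
  · rw [glueWeight_insert_right (notMem_of_mem_nonMemberSubfamily hx)]
  · rw [glueWeight_insert_left (notMem_of_mem_memberSubfamily hx)
      (notMem_of_mem_nonMemberSubfamily hy)]
    split_ifs
    exacts [sub_nonneg.2 (div_le_of_le_mul₀ hB hB hAC), le_rfl]
  · rw [glueWeight_insert_insert (notMem_of_mem_memberSubfamily hx)
      (notMem_of_mem_memberSubfamily hy)]
    exact mul_nonneg (by positivity) (hu x hx y hy)

theorem superset_of_glueWeight_ne_zero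
    (hu : ∀ x ∈ 𝒜.memberSubfamily a, ∀ y ∈ ℬ.memberSubfamily a, u x y ≠ 0 → x ⊇ y)
    (hv : ∀ x ∈ 𝒜.nonMemberSubfamily a, ∀ y ∈ ℬ.nonMemberSubfamily a, v x y ≠ 0 → x ⊇ y) :
    ∀ x ∈ 𝒜, ∀ y ∈ ℬ, glueWeight a A B C u v x y ≠ 0 → x ⊇ y := by
  simp only [forall_mem_iff_nonMemberSubfamily_and_memberSubfamily a 𝒜,
    forall_mem_iff_nonMemberSubfamily_and_memberSubfamily a ℬ]
  refine ⟨fun x hx ↦ ⟨fun y hy ↦ ?_, fun y _ ↦ ?_⟩, fun x hx ↦ ⟨fun y hy ↦ ?_, fun y hy ↦ ?_⟩⟩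
  · rw [glueWeight_of_notMem (notMem_of_mem_nonMemberSubfamily hx)
      (notMem_of_mem_nonMemberSubfamily hy)]
    exact fun h ↦ hv x hx y hy (right_ne_zero_of_mul h)
  · rw [glueWeight_insert_right (notMem_of_mem_nonMemberSubfamily hx)]
    exact fun h ↦ absurd rfl h
  · rw [glueWeight_insert_left (notMem_of_mem_memberSubfamily hx)
      (notMem_of_mem_nonMemberSubfamily hy), ne_eq, ite_eq_right_iff, not_forall]
    rintro ⟨rfl, -⟩
    exact subset_insert a x
  · rw [glueWeight_insert_insert (notMem_of_mem_memberSubfamily hx)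
      (notMem_of_mem_memberSubfamily hy)]
    exact fun h ↦ insert_subset_insert a (hu x hx y hy (right_ne_zero_of_mul h))

theorem sum_glueWeight_right (hB : B ≠ 0) (h𝒜ℬ : 𝒜.memberSubfamily a = ℬ.nonMemberSubfamily a)
    (hu : ∀ x ∈ 𝒜.memberSubfamily a, ∑ y ∈ ℬ.memberSubfamily a, u x y = A)
    (hv : ∀ x ∈ 𝒜.nonMemberSubfamily a, ∑ y ∈ ℬ.nonMemberSubfamily a, v x y = B) :
    ∀ x ∈ 𝒜, ∑ y ∈ ℬ, glueWeight a A B C u v x y = A + B := by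
  simp only [forall_mem_iff_nonMemberSubfamily_and_memberSubfamily a 𝒜,
    sum_eq_sum_nonMemberSubfamily_add_sum_memberSubfamily a ℬ]
  refine ⟨fun x hx ↦ ?_, fun x hx ↦ ?_⟩
  · have hax := notMem_of_mem_nonMemberSubfamily hx
    rw [sum_congr rfl fun y hy ↦ glueWeight_of_notMem hax (notMem_of_mem_nonMemberSubfamily hy),
      sum_congr rfl fun y _ ↦ glueWeight_insert_right hax, ← mul_sum, hv x hx, sum_const_zero,
      add_zero, div_mul_cancel₀ _ hB]
  · have hax := notMem_of_mem_memberSubfamily hx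
    rw [sum_congr rfl fun y hy ↦ glueWeight_insert_left hax (notMem_of_mem_nonMemberSubfamily hy),
      sum_congr rfl fun y hy ↦ glueWeight_insert_insert hax (notMem_of_mem_memberSubfamily hy),
      ← mul_sum, hu x hx, sum_ite_eq, if_pos (h𝒜ℬ ▸ hx)]
    field

theorem sum_glueWeight_left (hB : B ≠ 0) (h𝒜ℬ : 𝒜.memberSubfamily a = ℬ.nonMemberSubfamily a)
    (hu : ∀ y ∈ ℬ.memberSubfamily a, ∑ x ∈ 𝒜.memberSubfamily a, u x y = B)
    (hv : ∀ y ∈ ℬ.nonMemberSubfamily a, ∑ x ∈ 𝒜.nonMemberSubfamily a, v x y = C) :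
    ∀ y ∈ ℬ, ∑ x ∈ 𝒜, glueWeight a A B C u v x y = B + C := by
  simp only [forall_mem_iff_nonMemberSubfamily_and_memberSubfamily a ℬ,
    sum_eq_sum_nonMemberSubfamily_add_sum_memberSubfamily a 𝒜]
  refine ⟨fun y hy ↦ ?_, fun y hy ↦ ?_⟩
  · have hay := notMem_of_mem_nonMemberSubfamily hy
    rw [sum_congr rfl fun x hx ↦ glueWeight_of_notMem (notMem_of_mem_nonMemberSubfamily hx) hay,
      sum_congr rfl fun x hx ↦ glueWeight_insert_left (notMem_of_mem_memberSubfamily hx) hay,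
      ← mul_sum, hv y hy, sum_ite_eq', if_pos (h𝒜ℬ ▸ hy)]
    field
  · have hay := notMem_of_mem_memberSubfamily hy
    rw [sum_congr rfl fun x hx ↦ glueWeight_insert_right (notMem_of_mem_nonMemberSubfamily hx),
      sum_congr rfl fun x hx ↦ glueWeight_insert_insert (notMem_of_mem_memberSubfamily hx) hay,
      ← mul_sum, hu y hy, sum_const_zero, zero_add, div_mul_cancel₀ _ hB]

end GlueWeight

theorem IsCoupling.glue {u v : Finset α → Finset α → ℝ}
    (h𝒜ℬ : 𝒜.memberSubfamily a = ℬ.nonMemberSubfamily a)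
    (hne : (𝒜.memberSubfamily a).Nonempty)
    (hu : IsCoupling (· ⊇ ·) (𝒜.memberSubfamily a) (ℬ.memberSubfamily a) u)
    (hv : IsCoupling (· ⊇ ·) (𝒜.nonMemberSubfamily a) (ℬ.nonMemberSubfamily a) v)
    (hcard : #(ℬ.memberSubfamily a) * #(𝒜.nonMemberSubfamily a) ≤
      #(𝒜.memberSubfamily a) * #(𝒜.memberSubfamily a)) :
    IsCoupling (· ⊇ ·) 𝒜 ℬ (glueWeight a #(ℬ.memberSubfamily a) #(𝒜.memberSubfamily a)
      #(𝒜.nonMemberSubfamily a) u v) := by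
  have hB : (#(𝒜.memberSubfamily a) : ℝ) ≠ 0 := by exact_mod_cast hne.card_ne_zero
  have card_left : (#𝒜 : ℝ) = #(𝒜.memberSubfamily a) + #(𝒜.nonMemberSubfamily a) := by
    exact_mod_cast (card_memberSubfamily_add_card_nonMemberSubfamily a 𝒜).symm
  have card_right : (#ℬ : ℝ) = #(ℬ.memberSubfamily a) + #(𝒜.memberSubfamily a) := by
    rw [h𝒜ℬ]
    exact_mod_cast (card_memberSubfamily_add_card_nonMemberSubfamily a ℬ).symm
  refine ⟨?_, superset_of_glueWeight_ne_zero hu.rel hv.rel, ?_, ?_⟩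
  · exact glueWeight_nonneg (Nat.cast_nonneg _) (Nat.cast_nonneg _) (Nat.cast_nonneg _)
      (by exact_mod_cast hcard) hu.nonneg hv.nonneg
  · rw [card_right]
    exact sum_glueWeight_right hB h𝒜ℬ hu.sum_right (h𝒜ℬ ▸ hv.sum_right)
  · rw [card_left]
    exact sum_glueWeight_left hB h𝒜ℬ hu.sum_left hv.sum_left

theorem exists_isCoupling_of_subfamilies
    (h𝒜ℬ : 𝒜.memberSubfamily a = ℬ.nonMemberSubfamily a)
    (hmem : ∃ u, IsCoupling (· ⊇ ·) (𝒜.memberSubfamily a) (ℬ.memberSubfamily a) u)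
    (hnonMem : ∃ v, IsCoupling (· ⊇ ·) (𝒜.nonMemberSubfamily a) (ℬ.nonMemberSubfamily a) v)
    (hcard : #(ℬ.memberSubfamily a) * #(𝒜.nonMemberSubfamily a) ≤
      #(𝒜.memberSubfamily a) * #(𝒜.memberSubfamily a)) :
    ∃ w, IsCoupling (· ⊇ ·) 𝒜 ℬ w := by
  obtain ⟨u, hu⟩ := hmem
  obtain ⟨v, hv⟩ := hnonMem
  rcases (𝒜.memberSubfamily a).eq_empty_or_nonempty with hempty | hne
  · refine ⟨0, .zero ?_⟩
    rw [← card_eq_zero, ← card_eq_zero, ← card_memberSubfamily_add_card_nonMemberSubfamily a 𝒜,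
      ← card_memberSubfamily_add_card_nonMemberSubfamily a ℬ, ← h𝒜ℬ]
    simpa [hempty, or_comm] using hcard
  · exact ⟨_, hu.glue h𝒜ℬ hne hv hcard⟩

end Subfamily

section Ballot

/-- The ballot paths of length `N` with `k` up-steps, identified with their up-step sets. -/
noncomputable def ballotPaths (N k : ℕ) : Finset (Finset ℕ) :=
  {S ∈ (Icc 1 N).powersetCard k | ∀ j ∈ Icc 1 N, j ≤ 2 * #(S ∩ Icc 1 j)}

variable {N k : ℕ}

theorem mem_ballotPaths {S : Finset ℕ} : S ∈ ballotPaths N k ↔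
    S ⊆ Icc 1 N ∧ #S = k ∧ ∀ j ∈ Icc 1 N, j ≤ 2 * #(S ∩ Icc 1 j) := by
  simp only [ballotPaths, mem_filter, mem_powersetCard, and_assoc]

theorem sized_ballotPaths (N k : ℕ) : (ballotPaths N k : Set (Finset ℕ)).Sized k :=
  fun _ hS ↦ (mem_ballotPaths.1 hS).2.1

theorem ballotPaths_eq_empty (h : 2 * k < N) : ballotPaths N k = ∅ := by
  refine eq_empty_of_forall_notMem fun S hS ↦ ?_
  obtain ⟨hsub, rfl, hballot⟩ := mem_ballotPaths.1 hS
  have := hballot N (mem_Icc.2 ⟨by lia, le_rfl⟩)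
  rw [inter_eq_left.2 hsub] at this
  lia

theorem ballotPaths_zero_zero : ballotPaths 0 0 = {∅} := by
  simp [ballotPaths]

theorem ballotPaths_zero_succ (k : ℕ) : ballotPaths 0 (k + 1) = ∅ := by
  simp [ballotPaths]

theorem Icc_one_succ (N : ℕ) : Icc 1 (N + 1) = insert (N + 1) (Icc 1 N) :=
  (insert_Icc_right_eq_Icc_add_one (by lia)).symm

theorem succ_notMem_Icc_one {j : ℕ} (hj : j ≤ N) : N + 1 ∉ Icc 1 j := by
  rw [mem_Icc]
  lia

theorem nonMemberSubfamily_ballotPaths_succ (hk : N + 1 ≤ 2 * k) :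
    (ballotPaths (N + 1) k).nonMemberSubfamily (N + 1) = ballotPaths N k := by
  ext S
  simp only [mem_nonMemberSubfamily, mem_ballotPaths, Icc_one_succ, forall_mem_insert]
  constructor
  · rintro ⟨⟨hsub, hcard, -, hballot⟩, hS⟩
    exact ⟨(subset_insert_iff_of_notMem hS).1 hsub, hcard, hballot⟩
  · rintro ⟨hsub, hcard, hballot⟩
    have hsub' := hsub.trans (subset_insert (N + 1) _)
    exact ⟨⟨hsub', hcard, by rwa [inter_eq_left.2 hsub', hcard], hballot⟩,
      fun h ↦ succ_notMem_Icc_one le_rfl (hsub h)⟩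

theorem memberSubfamily_ballotPaths_succ (hk : N + 1 ≤ 2 * (k + 1)) :
    (ballotPaths (N + 1) (k + 1)).memberSubfamily (N + 1) = ballotPaths N k := by
  ext S
  have ballot_iff : (∀ j ∈ Icc 1 N, j ≤ 2 * #(insert (N + 1) S ∩ Icc 1 j)) ↔
      ∀ j ∈ Icc 1 N, j ≤ 2 * #(S ∩ Icc 1 j) :=
    forall₂_congr fun j hj ↦ by
      rw [insert_inter_of_notMem (succ_notMem_Icc_one (mem_Icc.1 hj).2)]
  simp only [mem_memberSubfamily, mem_ballotPaths, Icc_one_succ, forall_mem_insert, ballot_iff]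
  constructor
  · rintro ⟨⟨hsub, hcard, -, hballot⟩, hS⟩
    rw [card_insert_of_notMem hS, add_left_inj] at hcard
    exact ⟨(insert_subset_insert_iff hS).1 hsub, hcard, hballot⟩
  · rintro ⟨hsub, rfl, hballot⟩
    have hS : N + 1 ∉ S := fun h ↦ succ_notMem_Icc_one le_rfl (hsub h)
    have hsub' := insert_subset_insert (N + 1) hsub
    have hcard := card_insert_of_notMem hS
    exact ⟨⟨hsub', hcard, by rwa [inter_eq_left.2 hsub', hcard], hballot⟩, hS⟩

theorem card_ballotPaths_succ (hk : N + 1 ≤ 2 * (k + 1)) :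
    #(ballotPaths (N + 1) (k + 1)) = #(ballotPaths N (k + 1)) + #(ballotPaths N k) := by
  rw [← card_memberSubfamily_add_card_nonMemberSubfamily (N + 1),
    memberSubfamily_ballotPaths_succ hk, nonMemberSubfamily_ballotPaths_succ hk, add_comm]

theorem card_ballotPaths_mul_le (N : ℕ) {i j : ℕ} (hij : i ≤ j) :
    #(ballotPaths N i) * #(ballotPaths N (j + 1)) ≤
      #(ballotPaths N (i + 1)) * #(ballotPaths N j) := by
  induction N generalizing i j with
  | zero => simp [ballotPaths_zero_succ]
  | succ N ih =>
    rcases Nat.lt_or_ge (2 * i) (N + 1) with hi | hi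
    · simp [ballotPaths_eq_empty hi]
    obtain ⟨i, rfl⟩ : ∃ i', i = i' + 1 := ⟨i - 1, by lia⟩
    obtain ⟨j, rfl⟩ : ∃ j', j = j' + 1 := ⟨j - 1, by lia⟩
    rw [add_le_add_iff_right] at hij
    have outer : #(ballotPaths N i) * #(ballotPaths N (j + 2)) ≤
        #(ballotPaths N (i + 2)) * #(ballotPaths N j) := by
      rcases hij.eq_or_lt with rfl | hij
      · rw [mul_comm]
      · exact (ih (by lia : i ≤ j + 1)).trans (ih hij)
    simp only [card_ballotPaths_succ (by lia : N + 1 ≤ 2 * (i + 1)),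
      card_ballotPaths_succ (by lia : N + 1 ≤ 2 * (j + 1)),
      card_ballotPaths_succ (by lia : N + 1 ≤ 2 * (i + 1 + 1)),
      card_ballotPaths_succ (by lia : N + 1 ≤ 2 * (j + 1 + 1))]
    linarith [ih hij, ih (add_le_add_left hij 1)]

theorem exists_isCoupling_ballotPaths (N k : ℕ) :
    ∃ w, IsCoupling (· ⊇ ·) (ballotPaths N (k + 1)) (ballotPaths N k) w := by
  induction N generalizing k with
  | zero => exact ⟨0, by rw [ballotPaths_zero_succ]; exact .zero (.inl rfl)⟩
  | succ N ih =>
    rcases Nat.lt_or_ge (2 * k) (N + 1) with hk | hk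
    · exact ⟨0, .zero (.inr (ballotPaths_eq_empty hk))⟩
    obtain ⟨k, rfl⟩ : ∃ k', k = k' + 1 := ⟨k - 1, by lia⟩
    have hk' : N + 1 ≤ 2 * (k + 1 + 1) := by lia
    apply exists_isCoupling_of_subfamilies (a := N + 1) <;>
      simp only [memberSubfamily_ballotPaths_succ hk, memberSubfamily_ballotPaths_succ hk',
        nonMemberSubfamily_ballotPaths_succ hk, nonMemberSubfamily_ballotPaths_succ hk']
    · exact ih k
    · exact ih (k + 1)
    · exact card_ballotPaths_mul_le N k.le_succ

theorem sqEntropy_ballotPaths_le (N k : ℕ) (f : Finset ℕ → ℝ) :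
    sqEntropy (ballotPaths N k) f ≤ exchangeForm (ballotPaths N k) f := by
  induction N generalizing k f with
  | zero =>
    cases k with
    | zero => simp [ballotPaths_zero_zero, sqEntropy, rms_sq, exchangeForm]
    | succ k => simp [ballotPaths_zero_succ, sqEntropy, exchangeForm]
  | succ N ih =>
    rcases Nat.lt_or_ge (2 * k) (N + 1) with hk | hk
    · simp [ballotPaths_eq_empty hk, sqEntropy, exchangeForm]
    obtain ⟨k, rfl⟩ : ∃ k', k = k' + 1 := ⟨k - 1, by lia⟩
    obtain ⟨w, hw⟩ := exists_isCoupling_ballotPaths N k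
    rw [← nonMemberSubfamily_ballotPaths_succ hk, ← memberSubfamily_ballotPaths_succ hk] at hw
    refine sqEntropy_le_exchangeForm_of_isCoupling (sized_ballotPaths _ _) hw ?_ ?_ f
    · simpa only [nonMemberSubfamily_ballotPaths_succ hk] using ih (k + 1)
    · simpa only [memberSubfamily_ballotPaths_succ hk] using ih k

end Ballot

section Dyck

theorem dyck_eq_ballotPaths (n : ℕ) : dyck n = ballotPaths (2 * n) n := by
  ext S
  simp only [dyck, mem_filter, mem_powerset, mem_ballotPaths]

theorem dyckEnt_eq_mul_sqEntropy (n : ℕ) (f : Finset ℕ → ℝ) :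
    dyckEnt n f = dyckPi n * sqEntropy (dyck n) f := by
  rw [dyckEnt, sqEntropy, ← sum_mul, ← sum_mul, mul_comm, rms_sq, dyckPi, div_eq_mul_inv]

theorem dyckStep_eq_ite (n : ℕ) (x y : Finset ℕ) :
    dyckStep n x y = if IsExchange x y then 1 / (2 * (n : ℝ) ^ 2) else 0 :=
  if_congr Iff.rfl rfl rfl

theorem dyckDirichlet_eq_mul_exchangeForm (n : ℕ) (f : Finset ℕ → ℝ) :
    dyckDirichlet n f = 1 / (4 * (n : ℝ) ^ 2) * (dyckPi n * exchangeForm (dyck n) f) := by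
  rw [dyckDirichlet, exchangeForm]
  simp only [mul_sum]
  refine sum_congr rfl fun x _ ↦ sum_congr rfl fun y _ ↦ ?_
  rcases eq_or_ne x y with rfl | hxy
  · simp
  · rw [dyckP, if_neg hxy, dyckStep_eq_ite]
    split_ifs <;> ring

end Dyck

end

/-- Log-Sobolev inequality for the Dyck random transposition chain: the
log-Sobolev constant is at least `1/(4n²)`. -/
theorem dyck_logSobolev (n : ℕ) (hn : 1 ≤ n) (f : Finset ℕ → ℝ)
    (hf : ∃ x ∈ dyck n, f x ≠ 0) :
    dyckDirichlet n f ≥ (1 / (4 * (n : ℝ) ^ 2)) * dyckEnt n f := by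
  have hpi : 0 ≤ dyckPi n := inv_nonneg.2 (Nat.cast_nonneg _)
  have entropy_le : sqEntropy (dyck n) f ≤ exchangeForm (dyck n) f := by
    rw [dyck_eq_ballotPaths]
    exact sqEntropy_ballotPaths_le (2 * n) n f
  rw [ge_iff_le, dyckEnt_eq_mul_sqEntropy, dyckDirichlet_eq_mul_exchangeForm]
  gcongr
end
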